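/- arXiv:1307.4229 — 7 statements merged into one kernel-verified Lean document; each statement's English description precedes it below -/
import Mathlib

section
/- Let k ≥ 3, s ≥ 1 be integers and fix integers m₁, m₂, m₃ with 3 ≤ mⱼ ≤ k for j = 1,2,3. Then the number of ordered 4-tuples (f₁, f₂, f₃, f₄) of functions Fin k → Fin s whose associated transversals S₁, S₂, S₃, S₄ satisfy |S₁ ∩ S₂ ∩ S₃ ∩ S₄| ≥ 3, |S₁ ∩ S₂| = m₁, |(S₁ ∪ S₂) ∩ S₃| = m₂, and |(S₁ ∪ S₂ ∪ S₃) ∩ S₄| = m₃ is at most C(k,3) · s^{4k − m₁ − m₂ − m₃} · ∏_{j=1}^{3} C(jk, mⱼ − 3). -/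
/-- The transversal associated to a function `f : Fin k → Fin s`:
it picks the vertex `(i, f i)` in the `i`-th class. -/
def transversalOf {k s : ℕ} (f : Fin k → Fin s) : Finset (Fin k × Fin s) :=
  Finset.image (fun i => (i, f i)) Finset.univ

/-!
Fix the first transversal `S₁` (`s ^ k` choices) and, inside it, a set `W` of three vertices common
to all four transversals (`C(k, 3)` choices). Each later transversal contains `W` and meets the
union `U` of its predecessors in `m` vertices. That trace `X` satisfies `W ⊆ X ⊆ U`, so there are at
most `C(|U| - 3, m - 3)` possibilities for it, and once `X` is known the transversal is determined
in `m` of the `k` classes, which leaves at most `s ^ (k - m)` choices. Finally `|U| ≤ j * k` after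
`j` transversals.
-/

open Finset

section UnionBounds

variable {α β ι : Type*}

theorem ncard_le_card_mul_of_forall_exists_mem [Finite α] {A : Set α} {I : Finset ι}
    {B : ι → Set α} {N : ℕ} (hA : ∀ a ∈ A, ∃ i ∈ I, a ∈ B i) (hB : ∀ i ∈ I, (B i).ncard ≤ N) :
    A.ncard ≤ #I * N :=
  calc A.ncard ≤ (⋃ i ∈ I, B i).ncard :=
        Set.ncard_le_ncard fun a ha => by simpa only [Set.mem_iUnion, exists_prop] using hA a ha
    _ ≤ ∑ i ∈ I, (B i).ncard := Finset.set_ncard_biUnion_le I B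
    _ ≤ #I * N := Finset.sum_le_card_nsmul I _ N hB

theorem ncard_le_ncard_mul_of_fiber_le [Finite α] [Finite β] {A : Set α} {S : Set (α × β)} {N : ℕ}
    (hA : ∀ p ∈ S, p.1 ∈ A) (hN : ∀ a ∈ A, (Prod.mk a ⁻¹' S).ncard ≤ N) :
    S.ncard ≤ A.ncard * N := by
  rw [Set.ncard_eq_toFinset_card A]
  refine ncard_le_card_mul_of_forall_exists_mem (B := fun a => Prod.mk a '' (Prod.mk a ⁻¹' S))
    (fun p hp => ⟨p.1, by simpa using hA p hp, p.2, hp, rfl⟩) fun a ha => ?_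
  exact (Set.ncard_image_le (Set.toFinite _)).trans (hN a (by simpa using ha))

end UnionBounds

theorem ncard_eqOn {ι α : Type*} [Fintype ι] [Fintype α] (g : ι → α)
    (A : Finset ι) :
    {f : ι → α | Set.EqOn f g A}.ncard = Fintype.card α ^ (Fintype.card ι - #A) := by
  classical
  have hpi : {f : ι → α | Set.EqOn f g A} =
      Fintype.piFinset fun i => if i ∈ A then {g i} else univ := by
    ext f
    simp only [Set.mem_ofPred_eq, mem_coe, Fintype.mem_piFinset]
    refine forall_congr' fun i => ?_
    by_cases hi : i ∈ A <;> simp [hi]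
  rw [hpi, Set.ncard_coe_finset, Fintype.card_piFinset]
  simp only [apply_ite card, card_singleton, card_univ, prod_ite, prod_const_one, one_mul,
    prod_const, filter_notMem_eq_sdiff, ← compl_eq_univ_sdiff, card_compl]

section Transversals

variable {k s : ℕ}

theorem mem_transversalOf {f : Fin k → Fin s} {p : Fin k × Fin s} :
    p ∈ transversalOf f ↔ f p.1 = p.2 := by
  simp [transversalOf, Prod.ext_iff]

theorem card_transversalOf (f : Fin k → Fin s) : #(transversalOf f) = k := by
  rw [transversalOf, card_image_of_injective _ fun _ _ h => congrArg Prod.fst h, card_fin]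

theorem injOn_fst_transversalOf (f : Fin k → Fin s) :
    Set.InjOn Prod.fst (transversalOf f : Set (Fin k × Fin s)) := by
  intro p hp q hq hpq
  rw [mem_coe, mem_transversalOf] at hp hq
  exact Prod.ext hpq (by rw [← hp, ← hq, hpq])

theorem ncard_setOf_subset_transversalOf_le (X : Finset (Fin k × Fin s)) :
    {f : Fin k → Fin s | X ⊆ transversalOf f}.ncard ≤ s ^ (k - #X) := by
  obtain hempty | ⟨g, hg⟩ := {f : Fin k → Fin s | X ⊆ transversalOf f}.eq_empty_or_nonempty
  · simp [hempty]
  have hcard : #(X.image Prod.fst) = #X :=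
    card_image_of_injOn ((injOn_fst_transversalOf g).mono (coe_subset.2 hg))
  have hagree : {f | X ⊆ transversalOf f} ⊆ {f | Set.EqOn f g (X.image Prod.fst)} := by
    intro f hf i hi
    obtain ⟨p, hp, rfl⟩ := mem_image.1 (mem_coe.1 hi)
    rw [mem_transversalOf.1 (hf hp), mem_transversalOf.1 (hg hp)]
  calc {f | X ⊆ transversalOf f}.ncard
      ≤ {f | Set.EqOn f g (X.image Prod.fst)}.ncard := Set.ncard_le_ncard hagree
    _ = s ^ (k - #X) := by rw [ncard_eqOn, Fintype.card_fin, Fintype.card_fin, hcard]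

/-- The functions whose transversal contains `W` and meets `U` in exactly `m` vertices. With `U` the
union of the transversals chosen so far and `W` a set of common vertices, these are the candidates
for the next transversal. -/
def transversalsThrough (W U : Finset (Fin k × Fin s)) (m : ℕ) : Set (Fin k → Fin s) :=
  {f | W ⊆ transversalOf f ∧ #(U ∩ transversalOf f) = m}

theorem ncard_transversalsThrough_le {W U : Finset (Fin k × Fin s)} {m : ℕ} (hWU : W ⊆ U)
    (hWm : #W ≤ m) :
    (transversalsThrough W U m).ncard ≤ (#U - #W).choose (m - #W) * s ^ (k - m) := by
  rw [← card_filter_powersetCard_subset W U m hWU hWm]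
  refine ncard_le_card_mul_of_forall_exists_mem (B := fun X => {f | X ⊆ transversalOf f})
    (fun f ⟨hWf, hm⟩ => ⟨U ∩ transversalOf f, ?_, inter_subset_right⟩) fun X hX => ?_
  · exact mem_filter.2 ⟨mem_powersetCard.2 ⟨inter_subset_left, hm⟩, subset_inter hWU hWf⟩
  · rw [← (mem_powersetCard.1 (mem_filter.1 hX).1).2]
    exact ncard_setOf_subset_transversalOf_le X

theorem ncard_transversalsThrough_le_of_card_le {W U : Finset (Fin k × Fin s)} {m n : ℕ}
    (hWU : W ⊆ U) (hWm : #W ≤ m) (hUn : #U ≤ n) :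
    (transversalsThrough W U m).ncard ≤ n.choose (m - #W) * s ^ (k - m) :=
  (ncard_transversalsThrough_le hWU hWm).trans <|
    Nat.mul_le_mul_right _ <| Nat.choose_le_choose _ <| (Nat.sub_le _ _).trans hUn

theorem card_union_transversalOf_le {U : Finset (Fin k × Fin s)} {j : ℕ} (hU : #U ≤ j * k)
    (f : Fin k → Fin s) : #(U ∪ transversalOf f) ≤ (j + 1) * k := by
  rw [Nat.succ_mul]
  exact (card_union_le _ _).trans (Nat.add_le_add hU (card_transversalOf f).le)

/-- The ways to choose three further transversals after those with union `U`, all containing `W`,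
each meeting the union of its predecessors in the prescribed number `m₁`, `m₂`, `m₃` of vertices. -/
def transversalTriples (W U : Finset (Fin k × Fin s)) (m₁ m₂ m₃ : ℕ) :
    Set ((Fin k → Fin s) × (Fin k → Fin s) × (Fin k → Fin s)) :=
  {r | r.1 ∈ transversalsThrough W U m₁ ∧
    r.2.1 ∈ transversalsThrough W (U ∪ transversalOf r.1) m₂ ∧
    r.2.2 ∈ transversalsThrough W (U ∪ transversalOf r.1 ∪ transversalOf r.2.1) m₃}

theorem ncard_transversalTriples_le {W U : Finset (Fin k × Fin s)} {j m₁ m₂ m₃ : ℕ} (hWU : W ⊆ U)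
    (hm₁ : #W ≤ m₁) (hm₂ : #W ≤ m₂) (hm₃ : #W ≤ m₃) (hU : #U ≤ j * k) :
    (transversalTriples W U m₁ m₂ m₃).ncard ≤
      (j * k).choose (m₁ - #W) * s ^ (k - m₁) *
        (((j + 1) * k).choose (m₂ - #W) * s ^ (k - m₂) *
          (((j + 2) * k).choose (m₃ - #W) * s ^ (k - m₃))) := by
  refine (ncard_le_ncard_mul_of_fiber_le (A := transversalsThrough W U m₁)
    (fun _ hr => hr.1) fun f₁ _ => ?_).trans
    (Nat.mul_le_mul_right _ (ncard_transversalsThrough_le_of_card_le hWU hm₁ hU))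
  have hWU₁ : W ⊆ U ∪ transversalOf f₁ := hWU.trans subset_union_left
  have hU₁ := card_union_transversalOf_le hU f₁
  refine (ncard_le_ncard_mul_of_fiber_le (A := transversalsThrough W (U ∪ transversalOf f₁) m₂)
    (fun _ hr => hr.2.1) fun f₂ _ => ?_).trans
    (Nat.mul_le_mul_right _ (ncard_transversalsThrough_le_of_card_le hWU₁ hm₂ hU₁))
  have hWU₂ : W ⊆ U ∪ transversalOf f₁ ∪ transversalOf f₂ := hWU₁.trans subset_union_left
  have hU₂ := card_union_transversalOf_le hU₁ f₂
  exact (Set.ncard_le_ncard fun _ hr => hr.2.2).trans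
    (ncard_transversalsThrough_le_of_card_le hWU₂ hm₃ hU₂)

end Transversals

theorem count_clusters_with_profile_general (k s t m₁ m₂ m₃ : ℕ) (hm₁ : t ≤ m₁) (hm₁' : m₁ ≤ k)
    (hm₂ : t ≤ m₂) (hm₂' : m₂ ≤ k) (hm₃ : t ≤ m₃) (hm₃' : m₃ ≤ k) :
    {q : (Fin k → Fin s) × (Fin k → Fin s) × (Fin k → Fin s) × (Fin k → Fin s) |
        t ≤ #(transversalOf q.1 ∩ transversalOf q.2.1 ∩ transversalOf q.2.2.1 ∩
              transversalOf q.2.2.2) ∧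
        #(transversalOf q.1 ∩ transversalOf q.2.1) = m₁ ∧
        #((transversalOf q.1 ∪ transversalOf q.2.1) ∩ transversalOf q.2.2.1) = m₂ ∧
        #((transversalOf q.1 ∪ transversalOf q.2.1 ∪ transversalOf q.2.2.1) ∩
            transversalOf q.2.2.2) = m₃}.ncard
      ≤ k.choose t * s ^ (4 * k - m₁ - m₂ - m₃) *
          ((1 * k).choose (m₁ - t) * (2 * k).choose (m₂ - t) * (3 * k).choose (m₃ - t)) := by
  have hexp : 4 * k - m₁ - m₂ - m₃ = k + (k - m₁) + (k - m₂) + (k - m₃) := by omega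
  refine (ncard_le_ncard_mul_of_fiber_le (A := Set.univ) (fun _ _ => Set.mem_univ _)
    (N := k.choose t * ((1 * k).choose (m₁ - t) * s ^ (k - m₁) *
      ((2 * k).choose (m₂ - t) * s ^ (k - m₂) * ((3 * k).choose (m₃ - t) * s ^ (k - m₃)))))
    fun f₁ _ => ?_).trans_eq ?_
  · have hchoices : #((transversalOf f₁).powersetCard t) = k.choose t := by
      rw [card_powersetCard, card_transversalOf]
    rw [← hchoices]
    refine ncard_le_card_mul_of_forall_exists_mem
      (B := fun W => transversalTriples W (transversalOf f₁) m₁ m₂ m₃) ?_ fun W hW => ?_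
    · rintro ⟨f₂, f₃, f₄⟩ ⟨hcommon, h₁, h₂, h₃⟩
      obtain ⟨W, hW, hWt⟩ := exists_subset_card_eq hcommon
      simp only [subset_inter_iff] at hW
      obtain ⟨⟨⟨hW₁, hW₂⟩, hW₃⟩, hW₄⟩ := hW
      exact ⟨W, mem_powersetCard.2 ⟨hW₁, hWt⟩, ⟨hW₂, h₁⟩, ⟨hW₃, h₂⟩, hW₄, h₃⟩
    · obtain ⟨hWf, rfl⟩ := mem_powersetCard.1 hW
      exact ncard_transversalTriples_le hWf hm₁ hm₂ hm₃ (by rw [card_transversalOf, one_mul])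
  · have hfirst : (Set.univ : Set (Fin k → Fin s)).ncard = s ^ k := by simp [Set.ncard_univ]
    rw [hfirst, hexp, pow_add, pow_add, pow_add]
    ring

/-- The number of ordered 4-tuples `(f₁,f₂,f₃,f₄)` of functions `Fin k → Fin s`
whose transversals `S₁,…,S₄` satisfy `|S₁∩S₂∩S₃∩S₄| ≥ 3`, `|S₁∩S₂| = m₁`,
`|(S₁∪S₂)∩S₃| = m₂` and `|(S₁∪S₂∪S₃)∩S₄| = m₃` is at most
`C(k,3) · s^{4k-m₁-m₂-m₃} · ∏_{j=1}^3 C(jk, mⱼ-3)`. -/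
theorem count_clusters_with_profile (k s : ℕ) (hk : 3 ≤ k) (hs : 1 ≤ s)
    (m₁ m₂ m₃ : ℕ) (hm₁ : 3 ≤ m₁) (hm₁' : m₁ ≤ k) (hm₂ : 3 ≤ m₂) (hm₂' : m₂ ≤ k)
    (hm₃ : 3 ≤ m₃) (hm₃' : m₃ ≤ k) :
    {q : (Fin k → Fin s) × (Fin k → Fin s) × (Fin k → Fin s) × (Fin k → Fin s) |
        3 ≤ (transversalOf q.1 ∩ transversalOf q.2.1 ∩ transversalOf q.2.2.1 ∩
              transversalOf q.2.2.2).card ∧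
        (transversalOf q.1 ∩ transversalOf q.2.1).card = m₁ ∧
        ((transversalOf q.1 ∪ transversalOf q.2.1) ∩ transversalOf q.2.2.1).card = m₂ ∧
        ((transversalOf q.1 ∪ transversalOf q.2.1 ∪ transversalOf q.2.2.1) ∩
            transversalOf q.2.2.2).card = m₃}.ncard
      ≤ Nat.choose k 3 * s ^ (4 * k - m₁ - m₂ - m₃) *
          (Nat.choose (1 * k) (m₁ - 3) * Nat.choose (2 * k) (m₂ - 3) *
            Nat.choose (3 * k) (m₃ - 3)) := by
  exact count_clusters_with_profile_general k s 3 m₁ m₂ m₃ hm₁ hm₁' hm₂ hm₂' hm₃ hm₃'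
end

section
/- Let k ≥ 3, s ≥ 1 be integers and let S₁, S₂, S₃, S₄ be transversals of Fin k × Fin s. Set m₁ = |S₁ ∩ S₂|, m₂ = |(S₁ ∪ S₂) ∩ S₃| and m₃ = |(S₁ ∪ S₂ ∪ S₃) ∩ S₄|. Then the union of their edge sets satisfies |E(S₁) ∪ E(S₂) ∪ E(S₃) ∪ E(S₄)| ≥ 4·C(k,2) − C(m₁,2) − C(m₂,2) − C(m₃,2). -/
/-- A transversal of `Fin k × Fin s`: a finite set containing exactly one
vertex from each class `V_i = {i} × Fin s`. -/
def IsTransversal {k s : ℕ} (S : Finset (Fin k × Fin s)) : Prop :=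
  ∀ i : Fin k, (S.filter (fun v => v.1 = i)).card = 1

/-- The edge set of a transversal: all 2-element subsets of `S`. -/
def edgeSet {k s : ℕ} (S : Finset (Fin k × Fin s)) : Finset (Finset (Fin k × Fin s)) :=
  S.powersetCard 2

/-!
Add the sets one at a time. An `r`-subset of the new set `S` that already occurs is contained in the
union `T` of the previous sets, hence is an `r`-subset of `T ∩ S`, so all but at most
`C(|T ∩ S|, r)` of the `r`-subsets of `S` are new.
-/

open Finset

theorem IsTransversal.card_eq {k s : ℕ} {S : Finset (Fin k × Fin s)} (hS : IsTransversal S) :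
    #S = k := by
  calc
    #S = ∑ i, #{v ∈ S | v.1 = i} := card_eq_sum_card_fiberwise fun v _ ↦ mem_univ v.1
    _ = ∑ _i : Fin k, 1 := sum_congr rfl fun i _ ↦ hS i
    _ = k := by simp

-- Unlike `partialSups_add_one`, this specialization to `ℕ` also rewrites at numerals.
theorem partialSups_nat_add_one {β : Type*} [SemilatticeSup β] (f : ℕ → β) (n : ℕ) :
    partialSups f (n + 1) = partialSups f n ⊔ f (n + 1) :=
  partialSups_add_one f n

section PowersetCard

variable {α : Type*} [DecidableEq α]

theorem card_add_choose_le_card_union_powersetCard {r : ℕ} {S T : Finset α}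
    {A : Finset (Finset α)} (hA : A ⊆ powersetCard r T) :
    #A + (#S).choose r ≤ #(A ∪ powersetCard r S) + (#(T ∩ S)).choose r := by
  have old_subset : A ∩ powersetCard r S ⊆ powersetCard r (T ∩ S) := fun e he ↦ by
    obtain ⟨heA, heS⟩ := mem_inter.1 he
    obtain ⟨heS, he_card⟩ := mem_powersetCard.1 heS
    have heT := (mem_powersetCard.1 (hA heA)).1
    exact mem_powersetCard.2 ⟨subset_inter heT heS, he_card⟩
  calc
    #A + (#S).choose r = #A + #(powersetCard r S) := by rw [card_powersetCard]
    _ = #(A ∪ powersetCard r S) + #(A ∩ powersetCard r S) := (card_union_add_card_inter _ _).symm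
    _ ≤ #(A ∪ powersetCard r S) + #(powersetCard r (T ∩ S)) := by gcongr
    _ = #(A ∪ powersetCard r S) + (#(T ∩ S)).choose r := by rw [card_powersetCard]

theorem partialSups_powersetCard_subset (r : ℕ) (S : ℕ → Finset α) (n : ℕ) :
    partialSups (fun i ↦ powersetCard r (S i)) n ⊆ powersetCard r (partialSups S n) :=
  partialSups_le _ _ _ fun _ hi ↦ powersetCard_mono (le_partialSups_of_le S hi)

theorem edge_union_lower_bound_general (r : ℕ) (S : ℕ → Finset α) (n : ℕ) :
    ∑ i ∈ range (n + 1), (#(S i)).choose r ≤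
      #(partialSups (fun i ↦ powersetCard r (S i)) n) +
        ∑ i ∈ range n, (#(partialSups S i ∩ S (i + 1))).choose r := by
  induction n with
  | zero => simp
  | succ n ih =>
    have step := card_add_choose_le_card_union_powersetCard (S := S (n + 1))
      (partialSups_powersetCard_subset r S n)
    rw [sum_range_succ, sum_range_succ (fun i ↦ (#(partialSups S i ∩ S (i + 1))).choose r),
      partialSups_nat_add_one, sup_eq_union]
    omega

end PowersetCard

/-- For transversals `S₁,S₂,S₃,S₄` with `m₁ = |S₁∩S₂|`, `m₂ = |(S₁∪S₂)∩S₃|`,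
`m₃ = |(S₁∪S₂∪S₃)∩S₄|`, the union of their edge sets has at least
`4·C(k,2) - C(m₁,2) - C(m₂,2) - C(m₃,2)` elements. -/
theorem edge_union_lower_bound (k s : ℕ) (hk : 3 ≤ k) (hs : 1 ≤ s)
    (S₁ S₂ S₃ S₄ : Finset (Fin k × Fin s))
    (hS₁ : IsTransversal S₁) (hS₂ : IsTransversal S₂)
    (hS₃ : IsTransversal S₃) (hS₄ : IsTransversal S₄) :
    ((edgeSet S₁ ∪ edgeSet S₂ ∪ edgeSet S₃ ∪ edgeSet S₄).card : ℤ) ≥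
      4 * Nat.choose k 2 - Nat.choose ((S₁ ∩ S₂).card) 2
        - Nat.choose (((S₁ ∪ S₂) ∩ S₃).card) 2
        - Nat.choose (((S₁ ∪ S₂ ∪ S₃) ∩ S₄).card) 2 := by
  have bound := edge_union_lower_bound_general 2
    (fun | 0 => S₁ | 1 => S₂ | 2 => S₃ | _ => S₄) 3
  simp only [sum_range_succ, sum_range_zero, partialSups_nat_add_one, partialSups_zero,
    sup_eq_union, hS₁.card_eq, hS₂.card_eq, hS₃.card_eq, hS₄.card_eq] at bound
  unfold edgeSet
  omega
end

section
/- Let k ≥ 3 and s ≥ 1 be integers. The number of 4-element sets {S₁, S₂, S₃, S₄} of pairwise distinct transversals of Fin k × Fin s that form a sunflower (i.e., for which there exists a 3-element set T ⊆ V with S_i ∩ S_j = T for all i ≠ j) is at most C(k,3) · s^{4k − 9}. -/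
/-!
Let `k` be the number of classes, each of size at most `s`, and consider sunflowers of `r ≥ 2`
transversals with a kernel `T` of size `t`. The kernel is contained in each of the transversals, so
it consists of one vertex from each of `t` classes: there are at most `C(k,t) · s^t` such kernels. A
transversal containing `T` is determined by its part outside `T`, which picks one vertex from each
of the other `k - t` classes, so at most `s^(k-t)` transversals contain `T`, and a sunflower with
kernel `T` is a choice of `r` of them.
-/

open Finset

section PartialTransversals

variable {V ι : Type*} [Fintype V] (p : V → ι) {I J : Finset ι} {S T : Finset V}

open scoped Classical in
/-- The partial transversals supported on `I` of the partition of `V` into the fibres of `p`: the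
sets of vertices meeting the class of each `i ∈ I` in one vertex and the other classes in none. -/
noncomputable def partialTransversals (I : Finset ι) : Finset (Finset V) :=
  {T | Set.BijOn p T I}

variable {p}

theorem mem_partialTransversals : T ∈ partialTransversals p I ↔ Set.BijOn p T I := by
  simp [partialTransversals]

theorem card_of_mem_partialTransversals (hT : T ∈ partialTransversals p I) : #T = #I :=
  have h := mem_partialTransversals.1 hT
  card_nbij p h.mapsTo h.injOn h.surjOn

variable [DecidableEq ι]

theorem mem_partialTransversals_univ [Fintype ι] :
    S ∈ partialTransversals p univ ↔ ∀ i, #{v ∈ S | p v = i} = 1 := by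
  simp only [mem_partialTransversals, card_eq_one_iff_existsUnique, mem_filter]
  constructor
  · intro hS i
    obtain ⟨v, hv, rfl⟩ := hS.surjOn (mem_coe.2 (mem_univ i))
    exact ⟨v, ⟨hv, rfl⟩, fun w hw => hS.injOn hw.1 hv hw.2⟩
  · refine fun h => ⟨fun v _ => mem_coe.2 (mem_univ _), fun v hv w hw hvw => ?_, fun i _ => ?_⟩
    · exact (h (p w)).unique ⟨hv, hvw⟩ ⟨hw, rfl⟩
    · exact (h i).exists

theorem mem_partialTransversals_image_of_subset (hS : S ∈ partialTransversals p J) (hTS : T ⊆ S) :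
    T ∈ partialTransversals p (T.image p) := by
  rw [mem_partialTransversals] at hS ⊢
  rw [coe_image]
  exact hS.subset_left hTS

theorem sdiff_mem_partialTransversals [DecidableEq V] (hS : S ∈ partialTransversals p J)
    (hT : T ∈ partialTransversals p I) (hTS : T ⊆ S) :
    S \ T ∈ partialTransversals p (J \ I) := by
  rw [mem_partialTransversals] at hS hT ⊢
  rw [coe_sdiff, coe_sdiff, ← hS.image_eq, ← hT.image_eq, ← hS.injOn.image_sdiff_subset hTS]
  exact hS.subset_left Set.sdiff_subset

variable (p) in
theorem card_partialTransversals_le_prod (I : Finset ι) :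
    #(partialTransversals p I) ≤ ∏ i ∈ I, #{v | p v = i} := by
  classical
  rw [← card_pi]
  refine card_le_card_of_surjOn (fun g => I.attach.image fun i => g i.1 i.2) fun T hT => ?_
  rw [mem_coe, mem_partialTransversals] at hT
  choose g hgT hpg using fun i (hi : i ∈ I) => hT.surjOn (mem_coe.2 hi)
  refine ⟨g, by simpa only [mem_coe, mem_pi, mem_filter_univ] using hpg, Subset.antisymm ?_ ?_⟩
  · exact image_subset_iff.2 fun i _ => hgT i.1 i.2
  · intro v hv
    have hpv : p v ∈ I := hT.mapsTo hv
    exact mem_image.2 ⟨⟨p v, hpv⟩, mem_attach _ _, hT.injOn (hgT _ hpv) hv (hpg _ hpv)⟩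

theorem card_partialTransversals_le_pow {s : ℕ} (hp : ∀ i, #{v | p v = i} ≤ s) (I : Finset ι) :
    #(partialTransversals p I) ≤ s ^ #I :=
  (card_partialTransversals_le_prod p I).trans (prod_le_pow_card _ _ _ fun i _ => hp i)

theorem card_filter_superset_partialTransversals_le [DecidableEq V]
    (hT : T ∈ partialTransversals p I) (J : Finset ι) :
    #{S ∈ partialTransversals p J | T ⊆ S} ≤ #(partialTransversals p (J \ I)) := by
  refine card_le_card_of_injOn (· \ T) (fun S hS => ?_) (fun S hS S' hS' h => ?_)
  · rw [mem_coe, mem_filter] at hS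
    exact sdiff_mem_partialTransversals hS.1 hT hS.2
  · rw [mem_coe, mem_filter] at hS hS'
    rw [← sdiff_union_of_subset hS.2, ← sdiff_union_of_subset hS'.2]
    exact congrArg (· ∪ T) h

end PartialTransversals

section Sunflowers

variable {V ι : Type*} [DecidableEq V]

/-- The family `A`, of any size, is a sunflower with kernel `T`. -/
def IsSunflower (A : Finset (Finset V)) (T : Finset V) : Prop :=
  (A : Set (Finset V)).Pairwise fun S₁ S₂ => S₁ ∩ S₂ = T

theorem IsSunflower.kernel_subset {A : Finset (Finset V)} {S T : Finset V} (h : IsSunflower A T)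
    (hA : 1 < #A) (hS : S ∈ A) : T ⊆ S := by
  obtain ⟨S', hS', hne⟩ := exists_mem_ne hA S
  rw [← h hS hS' hne.symm]
  exact inter_subset_left

variable [Fintype V] [Fintype ι] (p : V → ι)

/-- The sets of `r` transversals containing a common partial transversal of size `t`. They need not
be sunflowers: only the containment of the kernel is used to bound the number of sunflowers. -/
noncomputable def transversalStars (t r : ℕ) : Finset (Finset (Finset V)) :=
  (powersetCard t univ).biUnion fun I => (partialTransversals p I).biUnion fun T =>
    powersetCard r {S ∈ partialTransversals p univ | T ⊆ S}

variable {p}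

theorem IsSunflower.mem_transversalStars {A : Finset (Finset V)} {T : Finset V}
    (h : IsSunflower A T) (hA : 1 < #A) (htr : A ⊆ partialTransversals p univ) :
    A ∈ transversalStars p #T #A := by
  classical
  have hTA : ∀ S ∈ A, T ⊆ S := fun S hS => h.kernel_subset hA hS
  obtain ⟨S, hS⟩ := card_pos.1 (zero_lt_one.trans hA)
  have hT := mem_partialTransversals_image_of_subset (htr hS) (hTA S hS)
  simp only [transversalStars, mem_biUnion]
  exact ⟨T.image p,
    mem_powersetCard.2 ⟨subset_univ _, (card_of_mem_partialTransversals hT).symm⟩, T, hT,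
    mem_powersetCard.2 ⟨fun S hS => mem_filter.2 ⟨htr hS, hTA S hS⟩, rfl⟩⟩

variable [DecidableEq ι]

theorem card_transversalStars_le {s : ℕ} (hp : ∀ i, #{v | p v = i} ≤ s) (t r : ℕ) :
    #(transversalStars p t r) ≤
      (Fintype.card ι).choose t * (s ^ t * (s ^ (Fintype.card ι - t)).choose r) := by
  rw [← card_univ, ← card_powersetCard]
  refine card_biUnion_le_card_mul _ _ _ fun I hI => ?_
  obtain rfl : #I = t := (mem_powersetCard.1 hI).2
  have hthrough {T : Finset V} (hT : T ∈ partialTransversals p I) :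
      #{S ∈ partialTransversals p univ | T ⊆ S} ≤ s ^ (#(univ : Finset ι) - #I) := by
    rw [← card_sdiff_of_subset (subset_univ I)]
    exact (card_filter_superset_partialTransversals_le hT univ).trans
      (card_partialTransversals_le_pow hp _)
  refine (card_biUnion_le_card_mul _ _ _ fun T hT => ?_).trans
    (Nat.mul_le_mul_right _ (card_partialTransversals_le_pow hp I))
  rw [card_powersetCard]
  exact Nat.choose_le_choose r (hthrough hT)

theorem count_sunflowers_general {s r : ℕ} (hp : ∀ i, #{v | p v = i} ≤ s) (hr : 2 ≤ r) (t : ℕ) :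
    {A : Finset (Finset V) | #A = r ∧ (∀ S ∈ A, ∀ i, #{v ∈ S | p v = i} = 1) ∧
        ∃ T : Finset V, #T = t ∧ IsSunflower A T}.ncard
      ≤ (Fintype.card ι).choose t * s ^ (t + r * (Fintype.card ι - t)) := by
  calc
    _ ≤ #(transversalStars p t r) := by
      rw [← Set.ncard_coe_finset]
      refine Set.ncard_le_ncard ?_ (finite_toSet _)
      rintro A ⟨rfl, htr, T, rfl, hA⟩
      exact hA.mem_transversalStars hr fun S hS => mem_partialTransversals_univ.2 (htr S hS)
    _ ≤ (Fintype.card ι).choose t * (s ^ t * (s ^ (Fintype.card ι - t)).choose r) :=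
      card_transversalStars_le hp t r
    _ ≤ (Fintype.card ι).choose t * (s ^ t * (s ^ (Fintype.card ι - t)) ^ r) := by
      gcongr
      exact Nat.choose_le_pow _ _
    _ = (Fintype.card ι).choose t * s ^ (t + r * (Fintype.card ι - t)) := by
      rw [pow_add, mul_comm r, pow_mul]

end Sunflowers

/-- The number of 4-element sets of pairwise distinct transversals of
`Fin k × Fin s` forming a sunflower (there is a 3-element set `T` such that any
two of the four transversals intersect exactly in `T`) is at most
`C(k,3) · s^{4k-9}`. -/
theorem count_sunflowers (k s : ℕ) (hk : 3 ≤ k) (hs : 1 ≤ s) :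
    {A : Finset (Finset (Fin k × Fin s)) |
        A.card = 4 ∧ (∀ S ∈ A, IsTransversal S) ∧
        ∃ T : Finset (Fin k × Fin s), T.card = 3 ∧
          ∀ S₁ ∈ A, ∀ S₂ ∈ A, S₁ ≠ S₂ → S₁ ∩ S₂ = T}.ncard
      ≤ Nat.choose k 3 * s ^ (4 * k - 9) := by
  have hp (i : Fin k) : #{v : Fin k × Fin s | v.1 = i} ≤ s := by
    simp [← univ_product_univ, filter_product_left (· = i), filter_eq']
  have hexp : 3 + 4 * (k - 3) = 4 * k - 9 := by omega
  simpa only [Fintype.card_fin, hexp] using! count_sunflowers_general hp (r := 4) (by norm_num) 3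
end

section
/- There exists K such that for every integer k ≥ K, every j ∈ {1, 2, 3} and every integer m with 3 ≤ m ≤ k, one has C(jk, m − 3) · (2^{−(k+9)/2})^{m−3} · 2^{m(m−1)/2 − 3} ≤ 1, where the powers of 2 are real powers and C(a,b) denotes the binomial coefficient. -/
/-!
Put `t = m - 3` and `s = k + 4 - t`, so that `s ≥ 7`. The two powers of `2` combine to
`2 ^ (-(t * s) / 2)`, so the claim is `C(n, t) ^ 2 ≤ 2 ^ (t * s)` for `n = j * k`. Let `k ≥ 21`.
If `t < 7`, then `s` is so large that `n ^ 2 ≤ 2 ^ s`, and `C(n, t) ≤ n ^ t` suffices.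
If `t ≥ 7`, then `(t - 7) * (s - 7) ≥ 0` gives `t * s ≥ 7 * (t + s) - 49 = 7 * (k - 3) ≥ 2 * n`,
so the crude bound `C(n, t) ≤ 2 ^ n` suffices.
-/

lemma mul_sq_le_two_pow_of_le {a b c : ℕ} (ha : 3 ≤ a) (hab : a ≤ b) (h : c * a ^ 2 ≤ 2 ^ a) :
    c * b ^ 2 ≤ 2 ^ b := by
  induction b, hab using Nat.le_induction with
  | base => exact h
  | succ b hab ih =>
    have hdouble : (b + 1) ^ 2 ≤ 2 * b ^ 2 := by nlinarith
    calc c * (b + 1) ^ 2 ≤ c * (2 * b ^ 2) := by gcongr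
      _ = 2 * (c * b ^ 2) := by ring
      _ ≤ 2 * 2 ^ b := by gcongr
      _ = 2 ^ (b + 1) := (pow_succ' 2 b).symm

lemma choose_sq_le_two_pow_mul_of_sq_le {n s : ℕ} (t : ℕ) (h : n ^ 2 ≤ 2 ^ s) :
    n.choose t ^ 2 ≤ 2 ^ (t * s) :=
  calc n.choose t ^ 2 ≤ (n ^ t) ^ 2 := by gcongr; exact Nat.choose_le_pow n t
    _ = (n ^ 2) ^ t := pow_right_comm n t 2
    _ ≤ (2 ^ s) ^ t := by gcongr
    _ = 2 ^ (t * s) := (pow_mul' 2 t s).symm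

lemma choose_sq_le_two_pow {n e : ℕ} (t : ℕ) (h : 2 * n ≤ e) : n.choose t ^ 2 ≤ 2 ^ e :=
  calc n.choose t ^ 2 ≤ (2 ^ n) ^ 2 := by gcongr; exact Nat.choose_le_two_pow n t
    _ = 2 ^ (2 * n) := (pow_mul' 2 2 n).symm
    _ ≤ 2 ^ e := by gcongr; norm_num

lemma mul_add_le_mul_add_sq {d t s : ℕ} (ht : d ≤ t) (hs : d ≤ s) :
    d * (t + s) ≤ t * s + d ^ 2 := by
  obtain ⟨a, rfl⟩ := Nat.exists_eq_add_of_le ht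
  obtain ⟨b, rfl⟩ := Nat.exists_eq_add_of_le hs
  nlinarith [Nat.zero_le (a * b)]

lemma choose_sq_le_two_pow_mul {n t s d : ℕ} (hs : d ≤ s) (hlin : 2 * n + d ^ 2 ≤ d * (t + s))
    (hexp : n ^ 2 * 2 ^ d ≤ 2 ^ (t + s)) : n.choose t ^ 2 ≤ 2 ^ (t * s) := by
  obtain htd | hdt := lt_or_ge t d
  · apply choose_sq_le_two_pow_mul_of_sq_le
    refine le_of_mul_le_mul_right ?_ (Nat.two_pow_pos d)
    calc n ^ 2 * 2 ^ d ≤ 2 ^ (t + s) := hexp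
      _ ≤ 2 ^ (s + d) := Nat.pow_le_pow_right two_pos (by lia)
      _ = 2 ^ s * 2 ^ d := pow_add 2 s d
  · have hprod := mul_add_le_mul_add_sq hdt hs
    exact choose_sq_le_two_pow t (by lia)

lemma sq_le_two_pow_of_two_mul_le {n i : ℕ} (hi : 11 ≤ i) (hn : 2 * n ≤ 7 * i) :
    n ^ 2 ≤ 2 ^ i := by
  have hpow : 13 * i ^ 2 ≤ 2 ^ i := mul_sq_le_two_pow_of_le (by norm_num) hi (by norm_num)
  have hsq : (2 * n) ^ 2 ≤ (7 * i) ^ 2 := Nat.pow_le_pow_left hn 2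
  lia

lemma choose_sub_three_sq_le {k n m : ℕ} (hk : 14 ≤ k) (hn : 2 * n ≤ 7 * (k - 3)) (hm : 3 ≤ m)
    (hmk : m ≤ k) : n.choose (m - 3) ^ 2 ≤ 2 ^ ((m - 3) * (k + 7 - m)) := by
  have hsum : m - 3 + (k + 7 - m) = k - 3 + 7 := by lia
  refine choose_sq_le_two_pow_mul (d := 7) (by lia) (by lia) ?_
  rw [hsum, pow_add]
  exact Nat.mul_le_mul_right _ (sq_le_two_pow_of_two_mul_le (by lia) hn)

lemma rpow_pow_mul_rpow_eq {b : ℝ} (hb : 0 < b) {k m : ℕ} (hm : 3 ≤ m) (hmk : m ≤ k + 7) :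
    (b ^ (-((k : ℝ) + 9) / 2)) ^ (m - 3) * b ^ ((m : ℝ) * ((m : ℝ) - 1) / 2 - 3) =
      b ^ (-(((m - 3) * (k + 7 - m) : ℕ) : ℝ) / 2) := by
  rw [← Real.rpow_mul_natCast hb.le, ← Real.rpow_add hb]
  congr 1
  push_cast [hm, hmk]
  ring

lemma mul_rpow_neg_half_le_one {b c x : ℝ} (hb : 0 < b) (h : c ^ 2 ≤ b ^ x) :
    c * b ^ (-x / 2) ≤ 1 := by
  have hc : c ≤ b ^ (x / 2) := by
    rw [div_eq_mul_one_div, Real.rpow_mul hb.le, ← Real.sqrt_eq_rpow]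
    exact Real.le_sqrt_of_sq_le h
  calc c * b ^ (-x / 2) ≤ b ^ (x / 2) * b ^ (-x / 2) := by gcongr
    _ = 1 := by rw [← Real.rpow_add hb, neg_div, add_neg_cancel, Real.rpow_zero]

theorem g_le_one_general {k n m : ℕ} (hk : 14 ≤ k) (hn : 2 * n ≤ 7 * (k - 3)) (hm : 3 ≤ m)
    (hmk : m ≤ k) :
    (n.choose (m - 3) : ℝ) * ((2 : ℝ) ^ (-((k : ℝ) + 9) / 2)) ^ (m - 3) *
      (2 : ℝ) ^ ((m : ℝ) * ((m : ℝ) - 1) / 2 - 3) ≤ 1 := by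
  rw [mul_assoc, rpow_pow_mul_rpow_eq two_pos hm (by lia)]
  apply mul_rpow_neg_half_le_one two_pos
  rw [Real.rpow_natCast]
  exact_mod_cast choose_sub_three_sq_le hk hn hm hmk

/-- For all large enough `k`, all `j ∈ {1,2,3}` and all `3 ≤ m ≤ k`:
`C(jk, m-3) · (2^{-(k+9)/2})^{m-3} · 2^{m(m-1)/2 - 3} ≤ 1`. -/
theorem g_le_one :
    ∃ K : ℕ, ∀ k : ℕ, K ≤ k → ∀ j ∈ ({1, 2, 3} : Finset ℕ),
      ∀ m : ℕ, 3 ≤ m → m ≤ k →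
        (Nat.choose (j * k) (m - 3) : ℝ) *
          ((2 : ℝ) ^ (-((k : ℝ) + 9) / 2)) ^ (m - 3) *
          (2 : ℝ) ^ ((m : ℝ) * ((m : ℝ) - 1) / 2 - 3) ≤ 1 := by
  refine ⟨21, fun k hk j hj m hm hmk => g_le_one_general (by lia) ?_ hm hmk⟩
  have hj3 : j ≤ 3 := (by decide : ∀ i ∈ ({1, 2, 3} : Finset ℕ), i ≤ 3) j hj
  have hjk : j * k ≤ 3 * k := Nat.mul_le_mul_right k hj3
  lia
end

section
/- Let k ≥ 3, s ≥ 1 be integers and fix integers m₁, m₂, m₃ with 3 ≤ mⱼ ≤ k for j = 1,2,3. Then the sum of 2^{−|E(S₁) ∪ E(S₂) ∪ E(S₃) ∪ E(S₄)|} over all ordered 4-tuples (S₁, S₂, S₃, S₄) of transversals of Fin k × Fin s satisfying |S₁ ∩ S₂ ∩ S₃ ∩ S₄| ≥ 3, |S₁ ∩ S₂| = m₁, |(S₁ ∪ S₂) ∩ S₃| = m₂ and |(S₁ ∪ S₂ ∪ S₃) ∩ S₄| = m₃ is at most C(k,3) · s^{4k−9} · 2^{−4·C(k,2) + 9} ·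 ∏_{j=1}^{3} ( C(jk, mⱼ − 3) · s^{−(mⱼ−3)} · 2^{C(mⱼ,2) − 3} ). -/
/-!
A cluster `(A, B, C, D)` whose members share at least `t` vertices is built one transversal at a
time. Choose `A` in `s ^ k` ways, then a `t`-subset `T ⊆ A` of the common intersection. A new
transversal `S ⊇ T` meeting the union `U` of the previous ones in exactly `m` vertices is found by
choosing `m - t` further vertices in `U \ T` and completing these `m` vertices to a transversal, in
at most `s ^ (k - m)` ways. Such an `S` shares with the previous transversals only edges inside
`U ∩ S`, hence contributes at least `C(k, 2) - C(m, 2)` new ones, so that every cluster has weight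
at most `2 ^ (-4 C(k, 2) + ∑ C(mⱼ, 2))`.
-/

section

open Finset

section Powerset

variable {V : Type*}

lemma powersetCard_subset_powerset {S : Finset V} {n : ℕ} :
    S.powersetCard n ⊆ S.powerset :=
  fun _ he => mem_powerset.2 (mem_powersetCard.1 he).1

variable [DecidableEq V]

lemma card_add_choose_le_card_union_powersetCard_s9 {X : Finset (Finset V)} {U : Finset V}
    (hX : X ⊆ U.powerset) (S : Finset V) (n : ℕ) :
    #X + (#S).choose n ≤ #(X ∪ S.powersetCard n) + (#(U ∩ S)).choose n := by
  have h_inter : X ∩ S.powersetCard n ⊆ (U ∩ S).powersetCard n := fun e he => by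
    obtain ⟨heX, heS⟩ := mem_inter.1 he
    obtain ⟨heS, hen⟩ := mem_powersetCard.1 heS
    exact mem_powersetCard.2 ⟨subset_inter (mem_powerset.1 (hX heX)) heS, hen⟩
  calc #X + (#S).choose n
      = #(X ∪ S.powersetCard n) + #(X ∩ S.powersetCard n) := by
        rw [card_union_add_card_inter, card_powersetCard]
    _ ≤ #(X ∪ S.powersetCard n) + (#(U ∩ S)).choose n := by
        rw [← card_powersetCard n (U ∩ S)]
        gcongr

lemma union_powersetCard_subset_powerset_union {X : Finset (Finset V)} {U : Finset V}
    (hX : X ⊆ U.powerset) (S : Finset V) (n : ℕ) :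
    X ∪ S.powersetCard n ⊆ (U ∪ S).powerset :=
  union_subset (hX.trans (powerset_mono.2 subset_union_left))
    (powersetCard_subset_powerset.trans (powerset_mono.2 subset_union_right))

lemma sum_choose_le_card_union_powersetCard (A B C D : Finset V) (n : ℕ) :
    (#A).choose n + (#B).choose n + (#C).choose n + (#D).choose n ≤
      #(A.powersetCard n ∪ B.powersetCard n ∪ C.powersetCard n ∪ D.powersetCard n) +
        ((#(A ∩ B)).choose n + (#((A ∪ B) ∩ C)).choose n + (#((A ∪ B ∪ C) ∩ D)).choose n) := by
  have hA : A.powersetCard n ⊆ A.powerset := powersetCard_subset_powerset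
  have hAB := union_powersetCard_subset_powerset_union hA B n
  have hABC := union_powersetCard_subset_powerset_union hAB C n
  have hB_new := card_add_choose_le_card_union_powersetCard_s9 hA B n
  have hC_new := card_add_choose_le_card_union_powersetCard_s9 hAB C n
  have hD_new := card_add_choose_le_card_union_powersetCard_s9 hABC D n
  rw [card_powersetCard] at hB_new
  omega

end Powerset

lemma pow_sub_eq_pow_sub_mul_rpow {x : ℝ} (hx : 0 < x) {k t m : ℕ} (ht : t ≤ k) (hm : m ≤ k) :
    x ^ (k - m) = x ^ (k - t) * x ^ (-((m : ℝ) - t)) := by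
  rw [← Real.rpow_natCast, ← Real.rpow_natCast, ← Real.rpow_add hx, Nat.cast_sub ht,
    Nat.cast_sub hm]
  ring_nf

variable {k s : ℕ}

/-- The transversal `S_f = {(i, f i) : i ∈ Fin k}` of a choice function `f`. -/
def graphTransversal (f : Fin k → Fin s) : Finset (Fin k × Fin s) :=
  univ.image fun i => (i, f i)

@[simp]
lemma mem_graphTransversal {f : Fin k → Fin s} {v : Fin k × Fin s} :
    v ∈ graphTransversal f ↔ f v.1 = v.2 := by
  simp [graphTransversal, Prod.ext_iff]

lemma card_graphTransversal (f : Fin k → Fin s) : #(graphTransversal f) = k := by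
  rw [graphTransversal, card_image_of_injective _ fun i j h => congrArg Prod.fst h, card_univ,
    Fintype.card_fin]

namespace IsTransversal

instance : DecidablePred (IsTransversal (k := k) (s := s)) := fun S =>
  inferInstanceAs (Decidable (∀ i : Fin k, #{v ∈ S | v.1 = i} = 1))

variable {S : Finset (Fin k × Fin s)}

lemma exists_eq_graphTransversal (hS : IsTransversal S) : ∃ f, S = graphTransversal f := by
  choose v hv using fun i => card_eq_one.1 (hS i)
  have hv_mem (i : Fin k) : v i ∈ S ∧ (v i).1 = i :=
    mem_filter.1 (hv i ▸ mem_singleton_self (v i))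
  refine ⟨fun i => (v i).2, ext fun u => ?_⟩
  rw [mem_graphTransversal]
  constructor
  · intro hu
    rw [← mem_singleton.1 (hv u.1 ▸ mem_filter.2 ⟨hu, rfl⟩ : u ∈ {v u.1})]
  · intro hu
    rw [← Prod.ext (hv_mem u.1).2 hu]
    exact (hv_mem u.1).1

lemma card_eq_s9 (hS : IsTransversal S) : #S = k := by
  obtain ⟨f, rfl⟩ := hS.exists_eq_graphTransversal
  exact card_graphTransversal f

end IsTransversal

lemma card_transversals_superset_le (W : Finset (Fin k × Fin s)) :
    #{S | IsTransversal S ∧ W ⊆ S} ≤ s ^ (k - #W) := by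
  obtain h_empty | ⟨S₀, hS₀⟩ :=
    ({S | IsTransversal S ∧ W ⊆ S} : Finset (Finset (Fin k × Fin s))).eq_empty_or_nonempty
  · simp [h_empty]
  obtain ⟨hS₀, hW⟩ := (mem_filter.1 hS₀).2
  obtain ⟨f₀, rfl⟩ := hS₀.exists_eq_graphTransversal
  have hf₀ : ∀ v ∈ W, f₀ v.1 = v.2 := fun v hv => mem_graphTransversal.1 (hW hv)
  have h_card_classes : #(W.image Prod.fst) = #W :=
    card_image_of_injOn fun u hu v hv huv =>
      Prod.ext huv (by rw [← hf₀ u hu, ← hf₀ v hv, huv])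
  let choices (i : Fin k) : Finset (Fin s) := if i ∈ W.image Prod.fst then {f₀ i} else univ
  have h_cover : ({S | IsTransversal S ∧ W ⊆ S} : Finset (Finset (Fin k × Fin s))) ⊆
      (Fintype.piFinset choices).image graphTransversal := fun S hS => by
    obtain ⟨hS, hWS⟩ := (mem_filter.1 hS).2
    obtain ⟨f, rfl⟩ := hS.exists_eq_graphTransversal
    refine mem_image_of_mem _ (Fintype.mem_piFinset.2 fun i => ?_)
    by_cases hi : i ∈ W.image Prod.fst
    · obtain ⟨v, hv, rfl⟩ := mem_image.1 hi
      simp only [choices, if_pos hi, mem_singleton, hf₀ v hv, mem_graphTransversal.1 (hWS hv)]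
    · simp only [choices, if_neg hi, mem_univ]
  calc #{S | IsTransversal S ∧ W ⊆ S}
      ≤ #(Fintype.piFinset choices) := (card_le_card h_cover).trans card_image_le
    _ = ∏ i, if i ∈ W.image Prod.fst then 1 else s := by
        simp only [Fintype.card_piFinset, choices, apply_ite card, card_singleton, card_univ,
          Fintype.card_fin]
    _ = s ^ (k - #W) := by
        rw [prod_ite, prod_const_one, one_mul, prod_const, filter_notMem_eq_sdiff,
          card_sdiff_of_subset (subset_univ _), h_card_classes, card_univ, Fintype.card_fin]

/-- The transversals that contain the core `T` and meet `U` in exactly `m` vertices: the possible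
next members of a cluster with core `T` whose previous members have union `U`. -/
def extensions (U T : Finset (Fin k × Fin s)) (m : ℕ) : Finset (Finset (Fin k × Fin s)) :=
  {S | IsTransversal S ∧ T ⊆ S ∧ #(U ∩ S) = m}

lemma mem_extensions {U T S : Finset (Fin k × Fin s)} {m : ℕ} :
    S ∈ extensions U T m ↔ IsTransversal S ∧ T ⊆ S ∧ #(U ∩ S) = m := by
  simp [extensions]

lemma card_extensions_le {U T : Finset (Fin k × Fin s)} {m N : ℕ} (hTU : T ⊆ U) (hU : #U ≤ N)
    (hm : #T ≤ m) :
    #(extensions U T m) ≤ N.choose (m - #T) * s ^ (k - m) := by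
  have h_cover : extensions U T m ⊆ ((U \ T).powersetCard (m - #T)).biUnion
      fun W => {S | IsTransversal S ∧ W ∪ T ⊆ S} := fun S hS => by
    obtain ⟨hS, hTS, hUS⟩ := mem_extensions.1 hS
    refine mem_biUnion.2 ⟨(U ∩ S) \ T, mem_powersetCard.2 ⟨by gcongr; exact inter_subset_left, ?_⟩,
      mem_filter.2 ⟨mem_univ S, hS, union_subset (sdiff_subset.trans inter_subset_right) hTS⟩⟩
    rw [card_sdiff_of_subset (subset_inter hTU hTS), hUS]
  have h_fiber : ∀ W ∈ (U \ T).powersetCard (m - #T),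
      #{S | IsTransversal S ∧ W ∪ T ⊆ S} ≤ s ^ (k - m) := fun W hW => by
    obtain ⟨hWU, hW_card⟩ := mem_powersetCard.1 hW
    have h_card : #(W ∪ T) = m := by
      rw [card_union_of_disjoint (disjoint_of_subset_left hWU sdiff_disjoint), hW_card,
        Nat.sub_add_cancel hm]
    exact h_card ▸ card_transversals_superset_le (W ∪ T)
  calc #(extensions U T m)
      ≤ #((U \ T).powersetCard (m - #T)) * s ^ (k - m) :=
        (card_le_card h_cover).trans (card_biUnion_le_card_mul _ _ _ h_fiber)
    _ ≤ N.choose (m - #T) * s ^ (k - m) := by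
        rw [card_powersetCard]
        gcongr
        exact (card_le_card sdiff_subset).trans hU

/-- The clusters with first member `A` and core `T`, with overlap sizes `m₁`, `m₂`, `m₃`. -/
def clustersExtending (A T : Finset (Fin k × Fin s)) (m₁ m₂ m₃ : ℕ) :
    Finset (Finset (Fin k × Fin s) × Finset (Fin k × Fin s) ×
      Finset (Fin k × Fin s) × Finset (Fin k × Fin s)) :=
  (extensions A T m₁).biUnion fun B => (extensions (A ∪ B) T m₂).biUnion fun C =>
    (extensions (A ∪ B ∪ C) T m₃).image fun D => (A, B, C, D)

lemma card_clustersExtending_le {A T : Finset (Fin k × Fin s)} {m₁ m₂ m₃ : ℕ} (hA : #A ≤ k)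
    (hTA : T ⊆ A) (hm₁ : #T ≤ m₁) (hm₂ : #T ≤ m₂) (hm₃ : #T ≤ m₃) :
    #(clustersExtending A T m₁ m₂ m₃) ≤
      ((1 * k).choose (m₁ - #T) * s ^ (k - m₁)) *
        (((2 * k).choose (m₂ - #T) * s ^ (k - m₂)) *
          ((3 * k).choose (m₃ - #T) * s ^ (k - m₃))) := by
  refine (card_biUnion_le_card_mul _ _ _ fun B hB => ?_).trans
    (Nat.mul_le_mul_right _ (card_extensions_le hTA (by omega) hm₁))
  have hB_card : #B = k := (mem_extensions.1 hB).1.card_eq_s9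
  have hAB_card := card_union_le A B
  have hTAB : T ⊆ A ∪ B := hTA.trans subset_union_left
  refine (card_biUnion_le_card_mul _ _ _ fun C hC => ?_).trans
    (Nat.mul_le_mul_right _ (card_extensions_le hTAB (by omega) hm₂))
  have hC_card : #C = k := (mem_extensions.1 hC).1.card_eq_s9
  have hABC_card := card_union_le (A ∪ B) C
  exact card_image_le.trans
    (card_extensions_le (hTAB.trans subset_union_left) (by omega) hm₃)

/-- The quadruples of transversals with at least `t` common vertices in which the second, third
and fourth members meet the union of their predecessors in `m₁`, `m₂`, `m₃` vertices. -/
def profileClusters (k s t m₁ m₂ m₃ : ℕ) :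
    Finset (Finset (Fin k × Fin s) × Finset (Fin k × Fin s) ×
      Finset (Fin k × Fin s) × Finset (Fin k × Fin s)) :=
  {q | IsTransversal q.1 ∧ IsTransversal q.2.1 ∧ IsTransversal q.2.2.1 ∧ IsTransversal q.2.2.2 ∧
    t ≤ #(q.1 ∩ q.2.1 ∩ q.2.2.1 ∩ q.2.2.2) ∧
    #(q.1 ∩ q.2.1) = m₁ ∧ #((q.1 ∪ q.2.1) ∩ q.2.2.1) = m₂ ∧
    #((q.1 ∪ q.2.1 ∪ q.2.2.1) ∩ q.2.2.2) = m₃}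

section ProfileClusters

variable {t m₁ m₂ m₃ : ℕ}

lemma profileClusters_subset_biUnion_clustersExtending :
    profileClusters k s t m₁ m₂ m₃ ⊆
      ({A | IsTransversal A} : Finset (Finset (Fin k × Fin s))).biUnion fun A =>
        (A.powersetCard t).biUnion fun T => clustersExtending A T m₁ m₂ m₃ := by
  rintro ⟨A, B, C, D⟩ hq
  obtain ⟨hA, hB, hC, hD, h_core, h₁, h₂, h₃⟩ := (mem_filter.1 hq).2
  obtain ⟨T, hT, hT_card⟩ := exists_subset_card_eq h_core
  simp only [subset_inter_iff] at hT
  obtain ⟨⟨⟨hTA, hTB⟩, hTC⟩, hTD⟩ := hT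
  simp only [clustersExtending, mem_biUnion, mem_image, mem_filter, mem_univ, true_and,
    mem_powersetCard, mem_extensions]
  exact ⟨A, hA, T, ⟨hTA, hT_card⟩, B, ⟨hB, hTB, h₁⟩, C, ⟨hC, hTC, h₂⟩, D, ⟨hD, hTD, h₃⟩, rfl⟩

lemma card_profileClusters_le (hm₁ : t ≤ m₁) (hm₂ : t ≤ m₂) (hm₃ : t ≤ m₃) :
    #(profileClusters k s t m₁ m₂ m₃) ≤
      s ^ k * (k.choose t *
        (((1 * k).choose (m₁ - t) * s ^ (k - m₁)) *
          (((2 * k).choose (m₂ - t) * s ^ (k - m₂)) *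
            ((3 * k).choose (m₃ - t) * s ^ (k - m₃))))) := by
  refine (card_le_card profileClusters_subset_biUnion_clustersExtending).trans <|
    (card_biUnion_le_card_mul _ _ _ fun A hA => ?_).trans <| Nat.mul_le_mul_right _ <| by
      simpa using card_transversals_superset_le (∅ : Finset (Fin k × Fin s))
  have hA_card : #A = k := (mem_filter.1 hA).2.card_eq_s9
  refine (card_biUnion_le_card_mul _ _ _ fun T hT => ?_).trans_eq <| by
    rw [card_powersetCard, hA_card]
  obtain ⟨hTA, rfl⟩ := mem_powersetCard.1 hT
  exact card_clustersExtending_le hA_card.le hTA hm₁ hm₂ hm₃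

lemma coe_profileClusters :
    (profileClusters k s t m₁ m₂ m₃ : Set (Finset (Fin k × Fin s) × Finset (Fin k × Fin s) ×
      Finset (Fin k × Fin s) × Finset (Fin k × Fin s))) =
    {q | IsTransversal q.1 ∧ IsTransversal q.2.1 ∧ IsTransversal q.2.2.1 ∧
      IsTransversal q.2.2.2 ∧ t ≤ #(q.1 ∩ q.2.1 ∩ q.2.2.1 ∩ q.2.2.2) ∧
      #(q.1 ∩ q.2.1) = m₁ ∧ #((q.1 ∪ q.2.1) ∩ q.2.2.1) = m₂ ∧
      #((q.1 ∪ q.2.1 ∪ q.2.2.1) ∩ q.2.2.2) = m₃} :=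
  coe_filter_univ _

lemma two_rpow_neg_card_edgeSet_le {q : Finset (Fin k × Fin s) × Finset (Fin k × Fin s) ×
      Finset (Fin k × Fin s) × Finset (Fin k × Fin s)} (hq : q ∈ profileClusters k s t m₁ m₂ m₃) :
    (2 : ℝ) ^ (-(#(edgeSet q.1 ∪ edgeSet q.2.1 ∪ edgeSet q.2.2.1 ∪ edgeSet q.2.2.2) : ℝ)) ≤
      (2 : ℝ) ^ (-(4 * (k.choose 2 : ℝ)) + (m₁.choose 2 + m₂.choose 2 + m₃.choose 2)) := by
  obtain ⟨hA, hB, hC, hD, -, rfl, rfl, rfl⟩ := (mem_filter.1 hq).2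
  have h_edges := sum_choose_le_card_union_powersetCard q.1 q.2.1 q.2.2.1 q.2.2.2 2
  rw [hA.card_eq_s9, hB.card_eq_s9, hC.card_eq_s9, hD.card_eq_s9] at h_edges
  have h_edges_real := Nat.cast_le (α := ℝ).2 h_edges
  push_cast at h_edges_real
  refine Real.rpow_le_rpow_of_exponent_le one_le_two ?_
  unfold edgeSet
  linarith

theorem potential_of_profile_clusters_general (hs : 1 ≤ s) (hm₁ : t ≤ m₁) (hm₁' : m₁ ≤ k)
    (hm₂ : t ≤ m₂) (hm₂' : m₂ ≤ k) (hm₃ : t ≤ m₃) (hm₃' : m₃ ≤ k) :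
    ∑ q ∈ profileClusters k s t m₁ m₂ m₃,
        (2 : ℝ) ^ (-(#(edgeSet q.1 ∪ edgeSet q.2.1 ∪ edgeSet q.2.2.1 ∪ edgeSet q.2.2.2) : ℝ))
      ≤ (k.choose t : ℝ) * (s : ℝ) ^ (4 * k - 3 * t) *
          (2 : ℝ) ^ (-(4 * (k.choose 2 : ℝ)) + 3 * (t.choose 2 : ℝ)) *
        (((1 * k).choose (m₁ - t) : ℝ) * (s : ℝ) ^ (-((m₁ : ℝ) - t)) *
            (2 : ℝ) ^ ((m₁.choose 2 : ℝ) - t.choose 2) *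
          (((2 * k).choose (m₂ - t) : ℝ) * (s : ℝ) ^ (-((m₂ : ℝ) - t)) *
            (2 : ℝ) ^ ((m₂.choose 2 : ℝ) - t.choose 2)) *
          (((3 * k).choose (m₃ - t) : ℝ) * (s : ℝ) ^ (-((m₃ : ℝ) - t)) *
            (2 : ℝ) ^ ((m₃.choose 2 : ℝ) - t.choose 2))) := by
  have h_card := Nat.cast_le (α := ℝ).2 (card_profileClusters_le (k := k) (s := s) hm₁ hm₂ hm₃)
  have hs_pos : (0 : ℝ) < s := Nat.cast_pos.2 hs
  have hk : t ≤ k := hm₁.trans hm₁'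
  have h_exponent : 4 * k - 3 * t = k + (k - t) * 3 := by omega
  have h_two : (2 : ℝ) ^ (-(4 * (k.choose 2 : ℝ)) + (m₁.choose 2 + m₂.choose 2 + m₃.choose 2)) =
      2 ^ (-(4 * (k.choose 2 : ℝ)) + 3 * (t.choose 2 : ℝ)) *
        2 ^ ((m₁.choose 2 : ℝ) - t.choose 2) * 2 ^ ((m₂.choose 2 : ℝ) - t.choose 2) *
        2 ^ ((m₃.choose 2 : ℝ) - t.choose 2) := by
    simp only [← Real.rpow_add two_pos]
    ring_nf
  refine (sum_le_card_nsmul _ _ _ fun q hq => two_rpow_neg_card_edgeSet_le hq).trans ?_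
  rw [nsmul_eq_mul]
  refine (mul_le_mul_of_nonneg_right h_card (by positivity)).trans_eq ?_
  push_cast
  rw [h_two, pow_sub_eq_pow_sub_mul_rpow hs_pos hk hm₁', pow_sub_eq_pow_sub_mul_rpow hs_pos hk hm₂',
    pow_sub_eq_pow_sub_mul_rpow hs_pos hk hm₃', h_exponent, pow_add, pow_mul]
  ring

end ProfileClusters

end

/-- The sum of `2^{-|E(S₁) ∪ E(S₂) ∪ E(S₃) ∪ E(S₄)|}` over all ordered 4-tuples
of transversals with `|S₁∩S₂∩S₃∩S₄| ≥ 3`, `|S₁∩S₂| = m₁`, `|(S₁∪S₂)∩S₃| = m₂`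
and `|(S₁∪S₂∪S₃)∩S₄| = m₃` is at most
`C(k,3)·s^{4k-9}·2^{-4C(k,2)+9} · ∏_{j=1}^3 C(jk, mⱼ-3)·s^{-(mⱼ-3)}·2^{C(mⱼ,2)-3}`. -/
theorem potential_of_profile_clusters (k s : ℕ) (hk : 3 ≤ k) (hs : 1 ≤ s)
    (m₁ m₂ m₃ : ℕ) (hm₁ : 3 ≤ m₁) (hm₁' : m₁ ≤ k) (hm₂ : 3 ≤ m₂) (hm₂' : m₂ ≤ k)
    (hm₃ : 3 ≤ m₃) (hm₃' : m₃ ≤ k) :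
    ∑ᶠ q ∈ {q : Finset (Fin k × Fin s) × Finset (Fin k × Fin s) ×
          Finset (Fin k × Fin s) × Finset (Fin k × Fin s) |
        IsTransversal q.1 ∧ IsTransversal q.2.1 ∧ IsTransversal q.2.2.1 ∧
          IsTransversal q.2.2.2 ∧
        3 ≤ (q.1 ∩ q.2.1 ∩ q.2.2.1 ∩ q.2.2.2).card ∧
        (q.1 ∩ q.2.1).card = m₁ ∧ ((q.1 ∪ q.2.1) ∩ q.2.2.1).card = m₂ ∧
        ((q.1 ∪ q.2.1 ∪ q.2.2.1) ∩ q.2.2.2).card = m₃},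
        (2 : ℝ) ^ (-(((edgeSet q.1 ∪ edgeSet q.2.1 ∪ edgeSet q.2.2.1 ∪
            edgeSet q.2.2.2).card : ℝ)))
      ≤ (Nat.choose k 3 : ℝ) * (s : ℝ) ^ (4 * k - 9) *
          (2 : ℝ) ^ (-(4 * (Nat.choose k 2 : ℝ)) + 9) *
        ((Nat.choose (1 * k) (m₁ - 3) : ℝ) * (s : ℝ) ^ (-((m₁ : ℝ) - 3)) *
            (2 : ℝ) ^ ((Nat.choose m₁ 2 : ℝ) - 3) *
          ((Nat.choose (2 * k) (m₂ - 3) : ℝ) * (s : ℝ) ^ (-((m₂ : ℝ) - 3)) *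
            (2 : ℝ) ^ ((Nat.choose m₂ 2 : ℝ) - 3)) *
          ((Nat.choose (3 * k) (m₃ - 3) : ℝ) * (s : ℝ) ^ (-((m₃ : ℝ) - 3)) *
            (2 : ℝ) ^ ((Nat.choose m₃ 2 : ℝ) - 3))) := by
  rw [← coe_profileClusters, finsum_mem_coe_finset]
  have h_nine : (3 : ℝ) * 3 = 9 := by norm_num
  simpa only [show Nat.choose 3 2 = 3 from rfl, Nat.reduceMul, Nat.cast_ofNat, h_nine] using
    potential_of_profile_clusters_general hs hm₁ hm₁' hm₂ hm₂' hm₃ hm₃'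
end

section
/- There exists K such that the following holds for every integer k ≥ K and every integer s with (s : ℝ) ≥ 2^{(k+9)/2}: letting ℱ denote the family of edge sets of all transversals of Fin k × Fin s, letting ℱ₂⁴ denote the family of all clusters, and letting X denote the set of all 2-element subsets of Fin k × Fin s whose two elements lie in different classes (so |X| = C(k,2)·s²), one has ∑_{F ∈ ℱ} 2^{−|F|} > 16·|X|·( (∑_{F ∈ ℱ₂⁴} 2^{−|F|})^{1/4} + 1/4 ). -/
/-- `F` is a cluster: it is the union of the edge sets of four pairwise
distinct transversals whose edge sets share at least two elements. -/
def IsCluster {k s : ℕ} (F : Finset (Finset (Fin k × Fin s))) : Prop :=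
  ∃ S₁ S₂ S₃ S₄ : Finset (Fin k × Fin s),
    IsTransversal S₁ ∧ IsTransversal S₂ ∧ IsTransversal S₃ ∧ IsTransversal S₄ ∧
    S₁ ≠ S₂ ∧ S₁ ≠ S₃ ∧ S₁ ≠ S₄ ∧ S₂ ≠ S₃ ∧ S₂ ≠ S₄ ∧ S₃ ≠ S₄ ∧
    2 ≤ (edgeSet S₁ ∩ edgeSet S₂ ∩ edgeSet S₃ ∩ edgeSet S₄).card ∧
    F = edgeSet S₁ ∪ edgeSet S₂ ∪ edgeSet S₃ ∪ edgeSet S₄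

/-- The board `X`: all 2-element subsets of `Fin k × Fin s` whose two elements
lie in different classes. -/
def board (k s : ℕ) : Finset (Finset (Fin k × Fin s)) :=
  Finset.univ.filter (fun e => e.card = 2 ∧ (e.image Prod.fst).card = 2)

/-!
Transversals are the graphs `S_f` of functions `f : Fin k → Fin s`, so the left-hand side is
`s ^ k / 2 ^ C(k,2)`, and four transversals sharing two edges all pass through three common
vertices. It therefore suffices to sum the weight of the union over a choice of three classes, of
`f₁`, and of `f₂`, `f₃`, `f₄` through the three vertices of `S_{f₁}` in these classes, distinct or
not. The functions are adjoined one at a time. If `f` takes previously used values at `n + 3`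
coordinates, then its edge set repeats at most `C(n+3,2)` edges, so the weight is multiplied by at
most `2 ^ (C(n+3,2) - C(k,2))`. There are at most `C(k-3,n) 3 ^ n s ^ (k-3-n)` such `f`, and
`s ≥ 2 ^ ((k+9)/2)` is what makes `C(k-3,n) 3 ^ n 2 ^ C(n+3,2) ≤ 8 s ^ n` for all `n ≤ k - 3`.
Hence each of `f₂`, `f₃`, `f₄` contributes a factor at most `8 k s ^ (k-3) / 2 ^ C(k,2)`, so the
fourth root of the cluster sum is at most a polynomial in `k` times
`s ^ (k-9/4) / 2 ^ C(k,2)`. The factor `s ^ (-1/4)` relative to `s ^ (k-2)` is exponentially small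
in `k` and absorbs this polynomial. The summand `1/4` is negligible because already
`s ^ (k-2) ≥ 2 ^ ((k+9)(k-2)/2)` exceeds `4 k ^ 2 2 ^ C(k,2)`.
-/

section

open Finset

section Numeric

lemma choose_mul_pow_le_add_one_pow (m n c : ℕ) : m.choose n * c ^ n ≤ (c + 1) ^ m := by
  rcases lt_or_ge m n with h | h
  · simp [Nat.choose_eq_zero_of_lt h]
  · rw [add_pow, mul_comm]
    simpa using single_le_sum (f := fun i => c ^ i * 1 ^ (m - i) * m.choose i)
      (fun i _ => Nat.zero_le _) (mem_range.2 (Nat.lt_succ_of_le h))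

lemma choose_two_mul_two (n : ℕ) : n.choose 2 * 2 = n * (n - 1) := by
  rw [Nat.choose_two_right]
  exact Nat.div_mul_cancel (Nat.even_mul_pred_self n).two_dvd

lemma sq_choose_mul_three_pow_le_of_le {n d : ℕ} (hnd : n ≤ d)
    (h : (9 * (n + d) ^ 2) ^ 2 ≤ 2 ^ (n + d)) :
    ((n + d).choose n * 3 ^ n) ^ 2 ≤ 2 ^ (n * (d + 7)) := by
  have hbase : 9 * (n + d) ^ 2 ≤ 2 ^ (d + 7) := by
    refine (Nat.pow_le_pow_iff_left two_ne_zero).1 (h.trans ?_)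
    rw [← pow_mul]
    exact Nat.pow_le_pow_right two_pos (by lia)
  calc ((n + d).choose n * 3 ^ n) ^ 2
      ≤ ((n + d) ^ n * 3 ^ n) ^ 2 := by gcongr; exact Nat.choose_le_pow _ _
    _ = (9 * (n + d) ^ 2) ^ n := by
        rw [← mul_pow, ← pow_mul, mul_comm n 2, pow_mul]; congr 1; ring
    _ ≤ (2 ^ (d + 7)) ^ n := by gcongr
    _ = 2 ^ (n * (d + 7)) := by rw [← pow_mul, mul_comm]

lemma sq_choose_mul_three_pow_le_of_lt {n d : ℕ} (hdn : d < n) :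
    ((n + d).choose n * 3 ^ n) ^ 2 ≤ 2 ^ (n * (d + 7)) :=
  calc ((n + d).choose n * 3 ^ n) ^ 2
      ≤ (4 ^ (n + d)) ^ 2 := by gcongr; exact choose_mul_pow_le_add_one_pow _ _ 3
    _ = 2 ^ (4 * (n + d)) := by
        rw [← pow_mul, show (4 : ℕ) = 2 ^ 2 by norm_num, ← pow_mul]; congr 1; ring
    _ ≤ 2 ^ (n * (d + 7)) := Nat.pow_le_pow_right two_pos (by nlinarith)

lemma choose_mul_three_pow_mul_two_pow_le {m n s : ℕ} (hn : n ≤ m)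
    (hm : (9 * m ^ 2) ^ 2 ≤ 2 ^ m) (hs : 2 ^ (m + 12) ≤ s ^ 2) :
    m.choose n * 3 ^ n * 2 ^ ((n + 3).choose 2) ≤ 8 * s ^ n := by
  obtain ⟨d, rfl⟩ := Nat.exists_eq_add_of_le hn
  refine (Nat.pow_le_pow_iff_left two_ne_zero).1 ?_
  calc ((n + d).choose n * 3 ^ n * 2 ^ ((n + 3).choose 2)) ^ 2
      = ((n + d).choose n * 3 ^ n) ^ 2 * 2 ^ ((n + 3) * (n + 2)) := by
        rw [mul_pow _ (2 ^ _), ← pow_mul, choose_two_mul_two]; rfl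
    _ ≤ 2 ^ (n * (d + 7)) * 2 ^ ((n + 3) * (n + 2)) := by
        refine Nat.mul_le_mul_right _ ?_
        rcases le_or_gt n d with h | h
        · exact sq_choose_mul_three_pow_le_of_le h hm
        · exact sq_choose_mul_three_pow_le_of_lt h
    _ = 8 ^ 2 * (2 ^ (n + d + 12)) ^ n := by
        rw [← pow_mul, ← pow_add, show (8 : ℕ) = 2 ^ 3 by norm_num, ← pow_mul, ← pow_add]
        congr 1; ring
    _ ≤ 8 ^ 2 * (s ^ 2) ^ n := by gcongr
    _ = (8 * s ^ n) ^ 2 := by rw [mul_pow, pow_right_comm]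

lemma sum_choose_mul_three_pow_mul_two_pow_le {m s : ℕ}
    (hm : (9 * m ^ 2) ^ 2 ≤ 2 ^ m) (hs : 2 ^ (m + 12) ≤ s ^ 2) :
    ∑ n ∈ range (m + 1), m.choose n * (3 ^ n * s ^ (m - n) * 2 ^ ((n + 3).choose 2)) ≤
      8 * (m + 1) * s ^ m := by
  have hterm : ∀ n ∈ range (m + 1),
      m.choose n * (3 ^ n * s ^ (m - n) * 2 ^ ((n + 3).choose 2)) ≤ 8 * s ^ m := by
    intro n hn
    have hn : n ≤ m := mem_range_succ_iff.1 hn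
    calc m.choose n * (3 ^ n * s ^ (m - n) * 2 ^ ((n + 3).choose 2))
        = m.choose n * 3 ^ n * 2 ^ ((n + 3).choose 2) * s ^ (m - n) := by ring
      _ ≤ 8 * s ^ n * s ^ (m - n) :=
          Nat.mul_le_mul_right _ (choose_mul_three_pow_mul_two_pow_le hn hm hs)
      _ = 8 * s ^ m := by rw [mul_assoc, pow_mul_pow_sub _ hn]
  calc _ ≤ #(range (m + 1)) • (8 * s ^ m) := sum_le_card_nsmul _ _ _ hterm
    _ = 8 * (m + 1) * s ^ m := by rw [card_range, smul_eq_mul]; ring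

lemma eventually_const_mul_pow_le_pow (c p : ℕ) {b : ℕ} (hb : 1 < b) :
    ∀ᶠ k : ℕ in Filter.atTop, c * k ^ p ≤ b ^ k := by
  have hlittle := (isLittleO_pow_const_const_pow_of_one_lt (R := ℝ) p
    (Nat.one_lt_cast.2 hb)).const_mul_left (c : ℝ)
  filter_upwards [hlittle.bound one_pos] with k hk
  rw [one_mul, Real.norm_of_nonneg (by positivity), Real.norm_of_nonneg (by positivity)] at hk
  exact_mod_cast hk

lemma two_pow_le_sq_of_rpow_half_le {k s : ℕ} (hs : (2 : ℝ) ^ (((k : ℝ) + 9) / 2) ≤ s) :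
    2 ^ (k + 9) ≤ s ^ 2 := by
  have hsq : ((2 : ℝ) ^ (((k : ℝ) + 9) / 2)) ^ 2 = (2 : ℝ) ^ (k + 9) := by
    rw [← Real.rpow_mul_natCast zero_le_two, ← Real.rpow_natCast]
    push_cast
    ring_nf
  have h : (2 : ℝ) ^ (k + 9) ≤ (s : ℝ) ^ 2 := hsq ▸ by gcongr
  exact_mod_cast h

lemma two_pow_mul_pow_le_of_two_pow_le_sq {k s : ℕ} (hk : 2 ^ 41 * k ^ 28 ≤ 2 ^ k)
    (hs : 2 ^ (k + 9) ≤ s ^ 2) : 2 ^ 25 * k ^ 14 ≤ s := by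
  refine (Nat.pow_le_pow_iff_left two_ne_zero).1 ?_
  calc (2 ^ 25 * k ^ 14) ^ 2 = 2 ^ 9 * (2 ^ 41 * k ^ 28) := by ring
    _ ≤ 2 ^ 9 * 2 ^ k := by gcongr
    _ = 2 ^ (k + 9) := by ring
    _ ≤ s ^ 2 := hs

lemma four_mul_sq_mul_two_pow_choose_lt {k s : ℕ} (hk₃ : 3 ≤ k) (hk : 16 * k ^ 4 ≤ 2 ^ k)
    (hs : 2 ^ (k + 9) ≤ s ^ 2) : 4 * k ^ 2 * 2 ^ (k.choose 2) < s ^ (k - 2) := by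
  refine lt_of_pow_lt_pow_left₀ 2 (Nat.zero_le _) ?_
  have hexp : k + k * (k - 1) < (k + 9) * (k - 2) := by
    obtain ⟨m, rfl⟩ := Nat.exists_eq_add_of_le' hk₃
    simp only [Nat.add_succ_sub_one, Nat.reduceSubDiff]
    nlinarith
  calc (4 * k ^ 2 * 2 ^ (k.choose 2)) ^ 2
      = 16 * k ^ 4 * 2 ^ (k * (k - 1)) := by
        rw [mul_pow, ← pow_mul 2, choose_two_mul_two]; ring
    _ ≤ 2 ^ k * 2 ^ (k * (k - 1)) := by gcongr
    _ = 2 ^ (k + k * (k - 1)) := (pow_add _ _ _).symm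
    _ < 2 ^ ((k + 9) * (k - 2)) := Nat.pow_lt_pow_right one_lt_two hexp
    _ = (2 ^ (k + 9)) ^ (k - 2) := pow_mul _ _ _
    _ ≤ (s ^ 2) ^ (k - 2) := by gcongr
    _ = (s ^ (k - 2)) ^ 2 := pow_right_comm _ _ _

end Numeric

section Agreement

variable {ι α : Type*} [Fintype ι] [DecidableEq α]

/-- The coordinates at which `f` takes a value allowed by `D`. In the application `D i` lists the
values at `i` of the transversals chosen before `f`. -/
def hits (D : ι → Finset α) (f : ι → α) : Finset ι := {i | f i ∈ D i}

variable [DecidableEq ι] [Fintype α]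

/-- The functions that agree with `g` on `C`: the transversals through the vertices of `g`
above `C`. -/
def agreeingOn (C : Finset ι) (g : ι → α) : Finset (ι → α) := {f | ∀ i ∈ C, f i = g i}

lemma mem_agreeingOn {C : Finset ι} {f g : ι → α} : f ∈ agreeingOn C g ↔ ∀ i ∈ C, f i = g i := by
  simp [agreeingOn]

lemma card_hits_sdiff_add_card {C : Finset ι} {D : ι → Finset α} {f g : ι → α}
    (hg : ∀ i ∈ C, g i ∈ D i) (hf : f ∈ agreeingOn C g) :
    #(hits D f \ C) + #C = #(hits D f) := by
  refine card_sdiff_add_card_eq_card fun i hi => ?_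
  simpa [hits, mem_agreeingOn.1 hf i hi] using hg i hi

lemma card_filter_subset_hits_le {d : ℕ} {B C : Finset ι} (hBC : Disjoint B C)
    {D : ι → Finset α} (hD : ∀ i, #(D i) ≤ d) (g : ι → α) :
    #{f ∈ agreeingOn C g | B ⊆ hits D f} ≤ d ^ #B * Fintype.card α ^ (#Cᶜ - #B) := by
  have hB : B ⊆ Cᶜ := subset_compl_iff_disjoint_right.2 hBC
  let box (i : ι) : Finset α := if i ∈ C then {g i} else if i ∈ B then D i else univ
  have hbox : {f ∈ agreeingOn C g | B ⊆ hits D f} ⊆ Fintype.piFinset box := by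
    intro f hf
    obtain ⟨hfg, hfB⟩ := mem_filter.1 hf
    refine Fintype.mem_piFinset.2 fun i => ?_
    by_cases hiC : i ∈ C
    · simp [box, hiC, mem_agreeingOn.1 hfg i hiC]
    · by_cases hiB : i ∈ B
      · simpa [box, hiC, hiB, hits] using hfB hiB
      · simp [box, hiC, hiB]
  have hprodC : ∏ i ∈ C, #(box i) = 1 := prod_eq_one fun i hi => by simp [box, hi]
  have hprodB : ∏ i ∈ B, #(box i) ≤ d ^ #B :=
    prod_le_pow_card _ _ _ fun i hi => by simpa [box, hi, disjoint_left.1 hBC hi] using hD i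
  have hprodRest : ∏ i ∈ Cᶜ \ B, #(box i) = Fintype.card α ^ (#Cᶜ - #B) := by
    rw [← card_sdiff_of_subset hB]
    refine prod_eq_pow_card fun i hi => ?_
    obtain ⟨hiC, hiB⟩ := mem_sdiff.1 hi
    simp [box, mem_compl.1 hiC, hiB]
  calc #{f ∈ agreeingOn C g | B ⊆ hits D f} ≤ ∏ i, #(box i) :=
        (card_le_card hbox).trans_eq (Fintype.card_piFinset box)
    _ = (∏ i ∈ B, #(box i)) * Fintype.card α ^ (#Cᶜ - #B) := by
        rw [← prod_mul_prod_compl C, hprodC, one_mul, ← prod_sdiff hB, hprodRest, mul_comm]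
    _ ≤ d ^ #B * Fintype.card α ^ (#Cᶜ - #B) := by gcongr

lemma sum_agreeingOn_card_hits_le {d : ℕ} {C : Finset ι} {D : ι → Finset α} {g : ι → α}
    (hD : ∀ i, #(D i) ≤ d) (hg : ∀ i ∈ C, g i ∈ D i) (φ : ℕ → ℕ) :
    ∑ f ∈ agreeingOn C g, φ #(hits D f) ≤
      ∑ n ∈ range (#Cᶜ + 1),
        (#Cᶜ).choose n * (d ^ n * Fintype.card α ^ (#Cᶜ - n) * φ (n + #C)) := by
  have hmaps : ∀ f ∈ agreeingOn C g, hits D f \ C ∈ Cᶜ.powerset := fun f _ =>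
    mem_powerset.2 fun i hi => mem_compl.2 (mem_sdiff.1 hi).2
  have hfiber : ∀ B ∈ Cᶜ.powerset,
      ∑ f ∈ agreeingOn C g with hits D f \ C = B, φ #(hits D f) ≤
        d ^ #B * Fintype.card α ^ (#Cᶜ - #B) * φ (#B + #C) := by
    intro B hB
    have hBC : Disjoint B C := subset_compl_iff_disjoint_right.1 (mem_powerset.1 hB)
    calc ∑ f ∈ agreeingOn C g with hits D f \ C = B, φ #(hits D f)
        = ∑ f ∈ agreeingOn C g with hits D f \ C = B, φ (#B + #C) := by
          refine sum_congr rfl fun f hf => ?_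
          obtain ⟨hfg, rfl⟩ := mem_filter.1 hf
          rw [card_hits_sdiff_add_card hg hfg]
      _ ≤ #{f ∈ agreeingOn C g | B ⊆ hits D f} * φ (#B + #C) := by
          rw [sum_const, smul_eq_mul]
          gcongr with f
          rintro rfl
          exact sdiff_subset
      _ ≤ d ^ #B * Fintype.card α ^ (#Cᶜ - #B) * φ (#B + #C) := by
          gcongr; exact card_filter_subset_hits_le hBC hD g
  calc ∑ f ∈ agreeingOn C g, φ #(hits D f)
      = ∑ B ∈ Cᶜ.powerset, ∑ f ∈ agreeingOn C g with hits D f \ C = B, φ #(hits D f) :=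
        (sum_fiberwise_of_maps_to hmaps _).symm
    _ ≤ ∑ B ∈ Cᶜ.powerset, d ^ #B * Fintype.card α ^ (#Cᶜ - #B) * φ (#B + #C) :=
        sum_le_sum hfiber
    _ = _ := by
        rw [sum_powerset_apply_card
          (fun n => d ^ n * Fintype.card α ^ (#Cᶜ - n) * φ (n + #C))]
        simp only [smul_eq_mul]

end Agreement

section Weight

variable {β : Type*}

/-- The weight `2 ^ (-|F|)` of a winning set `F`, as in the Erdős–Selfridge potential of a
positional game. -/
noncomputable def edgeWeight (F : Finset β) : ℝ := (2 : ℝ) ^ (-(#F : ℝ))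

lemma edgeWeight_eq_inv (F : Finset β) : edgeWeight F = (2 ^ #F)⁻¹ := by
  rw [edgeWeight, Real.rpow_neg zero_le_two, Real.rpow_natCast]

lemma edgeWeight_nonneg (F : Finset β) : 0 ≤ edgeWeight F := by
  rw [edgeWeight]
  positivity

lemma edgeWeight_union [DecidableEq β] (U V : Finset β) :
    edgeWeight (U ∪ V) = edgeWeight U * edgeWeight V * 2 ^ #(U ∩ V) := by
  have h : (2 : ℝ) ^ #(U ∪ V) * 2 ^ #(U ∩ V) = 2 ^ #U * 2 ^ #V := by
    rw [← pow_add, ← pow_add, card_union_add_card_inter]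
  simp only [edgeWeight_eq_inv]
  field_simp
  linear_combination -h

end Weight

section Graph

variable {ι α : Type*}

/-- Every endpoint of an edge in `U` lies in `D`, viewed as a subset of `ι × α` with fibres
`D i`. -/
def EndpointsIn (U : Finset (Finset (ι × α))) (D : ι → Finset α) : Prop :=
  ∀ e ∈ U, ∀ v ∈ e, v.2 ∈ D v.1

variable [Fintype ι]

/-- The graph `S_f = {(i, f i)}` of `f`. The transversals are exactly the graphs of functions. -/
def functionGraph (f : ι → α) : Finset (ι × α) :=
  univ.map ⟨fun i => (i, f i), fun _ _ h => congrArg Prod.fst h⟩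

lemma mem_functionGraph {f : ι → α} {v : ι × α} : v ∈ functionGraph f ↔ v.2 = f v.1 := by
  refine mem_map.trans ⟨?_, fun h => ⟨v.1, mem_univ _, Prod.ext rfl h.symm⟩⟩
  rintro ⟨i, -, rfl⟩
  rfl

lemma card_functionGraph (f : ι → α) : #(functionGraph f) = Fintype.card ι :=
  card_map _

lemma functionGraph_injective : Function.Injective (functionGraph : (ι → α) → Finset (ι × α)) := by
  intro f g h
  funext i
  have hi : (i, f i) ∈ functionGraph g := h ▸ mem_functionGraph.2 rfl
  exact mem_functionGraph.1 hi

/-- The edge set `E(S_f)` of the transversal `S_f`. -/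
def graphEdges (f : ι → α) : Finset (Finset (ι × α)) := (functionGraph f).powersetCard 2

lemma card_graphEdges (f : ι → α) : #(graphEdges f) = (Fintype.card ι).choose 2 := by
  rw [graphEdges, card_powersetCard, card_functionGraph]

lemma graphEdges_injective (hι : 2 ≤ Fintype.card ι) :
    Function.Injective (graphEdges : (ι → α) → Finset (Finset (ι × α))) := fun f g h =>
  functionGraph_injective <|
    powersetCard_injOn two_ne_zero hι (card_functionGraph f) (card_functionGraph g) h

lemma endpointsIn_graphEdges (f : ι → α) : EndpointsIn (graphEdges f) fun i => {f i} :=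
  fun _ he _ hv => mem_singleton.2 <| mem_functionGraph.1 ((mem_powersetCard.1 he).1 hv)

variable [DecidableEq ι] [DecidableEq α]

lemma EndpointsIn.union_graphEdges {U : Finset (Finset (ι × α))} {D : ι → Finset α}
    (hU : EndpointsIn U D) (f : ι → α) :
    EndpointsIn (U ∪ graphEdges f) fun i => insert (f i) (D i) := by
  intro e he v hv
  rcases mem_union.1 he with he | he
  · exact mem_insert_of_mem (hU e he v hv)
  · exact mem_insert.2 <| .inl <| mem_singleton.1 <| endpointsIn_graphEdges f e he v hv

lemma card_inter_graphEdges_le {U : Finset (Finset (ι × α))} {D : ι → Finset α}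
    (hU : EndpointsIn U D) (f : ι → α) : #(U ∩ graphEdges f) ≤ (#(hits D f)).choose 2 := by
  have hsub : U ∩ graphEdges f ⊆ ((hits D f).image fun i => (i, f i)).powersetCard 2 := by
    intro e he
    obtain ⟨heU, hef⟩ := mem_inter.1 he
    obtain ⟨hef, hcard⟩ := mem_powersetCard.1 hef
    refine mem_powersetCard.2 ⟨fun v hv => ?_, hcard⟩
    have hvf : v.2 = f v.1 := mem_functionGraph.1 (hef hv)
    have hvD : f v.1 ∈ D v.1 := hvf ▸ hU e heU v hv
    exact mem_image.2 ⟨v.1, by simpa [hits] using hvD, by rw [← hvf]⟩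
  calc #(U ∩ graphEdges f) ≤ (#((hits D f).image fun i => (i, f i))).choose 2 :=
        (card_le_card hsub).trans_eq (card_powersetCard _ _)
    _ ≤ (#(hits D f)).choose 2 := Nat.choose_le_choose _ card_image_le

lemma edgeWeight_union_graphEdges_le {U : Finset (Finset (ι × α))} {D : ι → Finset α}
    (hU : EndpointsIn U D) (f : ι → α) :
    edgeWeight (U ∪ graphEdges f) ≤
      edgeWeight U / 2 ^ ((Fintype.card ι).choose 2) * 2 ^ ((#(hits D f)).choose 2) := by
  rw [edgeWeight_union, edgeWeight_eq_inv (graphEdges f), card_graphEdges, ← div_eq_mul_inv]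
  have := edgeWeight_nonneg U
  gcongr
  · exact one_le_two
  · exact card_inter_graphEdges_le hU f

end Graph

section Extension

variable {ι α : Type*} [Fintype ι] [DecidableEq ι] [Fintype α] [DecidableEq α]

/-- The factor by which the total weight grows at most when one more transversal through three
prescribed vertices is adjoined. Up to `8 * card ι`, it is the number of these transversals times
the weight of one of them. -/
noncomputable def extensionFactor (ι α : Type*) [Fintype ι] [Fintype α] : ℝ :=
  8 * Fintype.card ι * Fintype.card α ^ (Fintype.card ι - 3) / 2 ^ ((Fintype.card ι).choose 2)

lemma extensionFactor_nonneg (ι α : Type*) [Fintype ι] [Fintype α] :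
    0 ≤ extensionFactor ι α := by
  rw [extensionFactor]
  positivity

lemma sum_two_pow_choose_card_hits_le (hι : 648 * Fintype.card ι ^ 4 ≤ 2 ^ Fintype.card ι)
    (hα : 2 ^ (Fintype.card ι + 9) ≤ Fintype.card α ^ 2) {C : Finset ι} (hC : #C = 3)
    {D : ι → Finset α} {g : ι → α} (hD : ∀ i, #(D i) ≤ 3) (hg : ∀ i ∈ C, g i ∈ D i) :
    ∑ f ∈ agreeingOn C g, 2 ^ ((#(hits D f)).choose 2) ≤
      8 * Fintype.card ι * Fintype.card α ^ (Fintype.card ι - 3) := by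
  have hcard : Fintype.card ι = #Cᶜ + 3 := by rw [← hC, card_compl_add_card]
  rw [hcard] at hι hα ⊢
  have hm : (9 * #Cᶜ ^ 2) ^ 2 ≤ 2 ^ #Cᶜ := by
    have hpow : #Cᶜ ^ 4 ≤ (#Cᶜ + 3) ^ 4 := by gcongr; lia
    have hsq : (9 * #Cᶜ ^ 2) ^ 2 = 81 * #Cᶜ ^ 4 := by ring
    rw [pow_add] at hι
    lia
  calc ∑ f ∈ agreeingOn C g, 2 ^ ((#(hits D f)).choose 2)
      ≤ 8 * (#Cᶜ + 1) * Fintype.card α ^ #Cᶜ := by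
        refine (sum_agreeingOn_card_hits_le hD hg fun n => 2 ^ n.choose 2).trans ?_
        rw [hC]
        exact sum_choose_mul_three_pow_mul_two_pow_le hm hα
    _ ≤ 8 * (#Cᶜ + 3) * Fintype.card α ^ #Cᶜ := by gcongr; lia

lemma sum_edgeWeight_union_graphEdges_le
    (hι : 648 * Fintype.card ι ^ 4 ≤ 2 ^ Fintype.card ι)
    (hα : 2 ^ (Fintype.card ι + 9) ≤ Fintype.card α ^ 2) {C : Finset ι} (hC : #C = 3)
    {U : Finset (Finset (ι × α))} {D : ι → Finset α} {g : ι → α}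
    (hU : EndpointsIn U D) (hD : ∀ i, #(D i) ≤ 3) (hg : ∀ i ∈ C, g i ∈ D i) :
    ∑ f ∈ agreeingOn C g, edgeWeight (U ∪ graphEdges f) ≤
      edgeWeight U * extensionFactor ι α := by
  have hhits : (∑ f ∈ agreeingOn C g, 2 ^ ((#(hits D f)).choose 2) : ℝ) ≤
      8 * Fintype.card ι * Fintype.card α ^ (Fintype.card ι - 3) := by
    exact_mod_cast sum_two_pow_choose_card_hits_le hι hα hC hD hg
  have := edgeWeight_nonneg U
  calc ∑ f ∈ agreeingOn C g, edgeWeight (U ∪ graphEdges f)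
      ≤ ∑ f ∈ agreeingOn C g, edgeWeight U / 2 ^ ((Fintype.card ι).choose 2) *
          2 ^ ((#(hits D f)).choose 2) :=
        sum_le_sum fun f _ => edgeWeight_union_graphEdges_le hU f
    _ ≤ edgeWeight U / 2 ^ ((Fintype.card ι).choose 2) *
          (8 * Fintype.card ι * Fintype.card α ^ (Fintype.card ι - 3)) := by
        rw [← mul_sum]
        gcongr
    _ = edgeWeight U * extensionFactor ι α := by rw [extensionFactor]; ring

lemma sum_edgeWeight_union_four_le
    (hι : 648 * Fintype.card ι ^ 4 ≤ 2 ^ Fintype.card ι)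
    (hα : 2 ^ (Fintype.card ι + 9) ≤ Fintype.card α ^ 2) {C : Finset ι} (hC : #C = 3)
    (f₁ : ι → α) :
    ∑ f₂ ∈ agreeingOn C f₁, ∑ f₃ ∈ agreeingOn C f₁, ∑ f₄ ∈ agreeingOn C f₁,
        edgeWeight (graphEdges f₁ ∪ graphEdges f₂ ∪ graphEdges f₃ ∪ graphEdges f₄) ≤
      edgeWeight (graphEdges f₁) * extensionFactor ι α ^ 3 := by
  set ρ := extensionFactor ι α
  have hρ : 0 ≤ ρ := extensionFactor_nonneg ι α
  have hE₁ := endpointsIn_graphEdges f₁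
  calc _ ≤ ∑ f₂ ∈ agreeingOn C f₁, ∑ f₃ ∈ agreeingOn C f₁,
          edgeWeight (graphEdges f₁ ∪ graphEdges f₂ ∪ graphEdges f₃) * ρ :=
        sum_le_sum fun f₂ _ => sum_le_sum fun f₃ _ =>
          sum_edgeWeight_union_graphEdges_le hι hα hC
            ((hE₁.union_graphEdges f₂).union_graphEdges f₃)
            (fun _ => card_le_three) fun _ _ => by simp
    _ ≤ ∑ f₂ ∈ agreeingOn C f₁, edgeWeight (graphEdges f₁ ∪ graphEdges f₂) * ρ * ρ := by
        refine sum_le_sum fun f₂ _ => ?_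
        rw [← sum_mul]
        gcongr
        exact sum_edgeWeight_union_graphEdges_le hι hα hC (hE₁.union_graphEdges f₂)
          (fun _ => card_le_two.trans (by simp)) fun _ _ => by simp
    _ ≤ edgeWeight (graphEdges f₁) * ρ * ρ * ρ := by
        rw [← sum_mul, ← sum_mul]
        gcongr
        exact sum_edgeWeight_union_graphEdges_le hι hα hC hE₁ (by simp) (by simp)
    _ = edgeWeight (graphEdges f₁) * ρ ^ 3 := by ring

end Extension

section Transversals

variable {k s : ℕ}

lemma isTransversal_functionGraph (f : Fin k → Fin s) : IsTransversal (functionGraph f) := by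
  refine fun i => card_eq_one.2 ⟨(i, f i), ?_⟩
  ext ⟨j, a⟩
  simp only [mem_filter, mem_functionGraph, mem_singleton, Prod.mk.injEq]
  constructor <;> (rintro ⟨rfl, rfl⟩; exact ⟨rfl, rfl⟩)

lemma IsTransversal.exists_functionGraph_eq {S : Finset (Fin k × Fin s)} (hS : IsTransversal S) :
    ∃ f, functionGraph f = S := by
  have hfiber : ∀ i, ∃ a, {v ∈ S | v.1 = i} = {(i, a)} := by
    intro i
    obtain ⟨⟨j, a⟩, hv⟩ := card_eq_one.1 (hS i)
    have hmem : (j, a) ∈ ({v ∈ S | v.1 = i} : Finset _) := hv ▸ mem_singleton_self _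
    obtain rfl : j = i := (mem_filter.1 hmem).2
    exact ⟨a, hv⟩
  choose f hf using hfiber
  refine ⟨f, ?_⟩
  ext ⟨i, a⟩
  have hmem : (i, a) ∈ ({v ∈ S | v.1 = i} : Finset _) ↔ (i, a) ∈ S := by simp
  simp [← hmem, hf, mem_functionGraph]

lemma setOf_edgeSet_eq_range_graphEdges :
    {F : Finset (Finset (Fin k × Fin s)) | ∃ S, IsTransversal S ∧ F = edgeSet S} =
      Set.range graphEdges := by
  ext F
  constructor
  · rintro ⟨S, hS, rfl⟩
    obtain ⟨f, rfl⟩ := hS.exists_functionGraph_eq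
    exact ⟨f, rfl⟩
  · rintro ⟨f, rfl⟩
    exact ⟨_, isTransversal_functionGraph f, rfl⟩

lemma finsum_edgeWeight_transversals (hk : 2 ≤ k) :
    ∑ᶠ F ∈ {F : Finset (Finset (Fin k × Fin s)) | ∃ S, IsTransversal S ∧ F = edgeSet S},
      edgeWeight F = (s : ℝ) ^ k / 2 ^ k.choose 2 := by
  rw [setOf_edgeSet_eq_range_graphEdges,
    finsum_mem_range (graphEdges_injective (by rwa [Fintype.card_fin])), finsum_eq_sum_of_fintype]
  simp [edgeWeight_eq_inv, card_graphEdges, div_eq_mul_inv]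

lemma two_mul_card_board_le (k s : ℕ) : 2 * #(board k s) ≤ k ^ 2 * s ^ 2 := by
  have hsub : board k s ⊆ univ.powersetCard 2 := fun e he =>
    mem_powersetCard.2 ⟨subset_univ e, (mem_filter.1 he).2.1⟩
  calc 2 * #(board k s) ≤ 2 * (k * s).choose 2 := by
        simpa using card_le_card hsub
    _ = k * s * (k * s - 1) := by rw [mul_comm, choose_two_mul_two]
    _ ≤ k * s * (k * s) := by gcongr; exact Nat.sub_le _ _
    _ = k ^ 2 * s ^ 2 := by ring

end Transversals

section Clusters

lemma card_image_fst_of_subset_functionGraph {ι α : Type*} [Fintype ι] [DecidableEq ι]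
    {T : Finset (ι × α)} {f : ι → α} (hf : T ⊆ functionGraph f) : #(T.image Prod.fst) = #T :=
  card_image_of_injOn fun _ hv _ hw h => Prod.ext h <| by
    rw [mem_functionGraph.1 (hf hv), mem_functionGraph.1 (hf hw), h]

lemma mem_agreeingOn_image_fst {ι α : Type*} [Fintype ι] [DecidableEq ι] [Fintype α]
    [DecidableEq α] {T : Finset (ι × α)} {f g : ι → α} (hf : T ⊆ functionGraph f)
    (hg : T ⊆ functionGraph g) : f ∈ agreeingOn (T.image Prod.fst) g := by
  refine mem_agreeingOn.2 fun i hi => ?_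
  obtain ⟨v, hv, rfl⟩ := mem_image.1 hi
  rw [← mem_functionGraph.1 (hf hv), ← mem_functionGraph.1 (hg hv)]

variable {k s : ℕ}

lemma three_le_card_inter_of_two_le_card_inter_edgeSet {S₁ S₂ S₃ S₄ : Finset (Fin k × Fin s)}
    (h : 2 ≤ #(edgeSet S₁ ∩ edgeSet S₂ ∩ edgeSet S₃ ∩ edgeSet S₄)) :
    3 ≤ #(S₁ ∩ S₂ ∩ S₃ ∩ S₄) := by
  have hsub : edgeSet S₁ ∩ edgeSet S₂ ∩ edgeSet S₃ ∩ edgeSet S₄ ⊆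
      (S₁ ∩ S₂ ∩ S₃ ∩ S₄).powersetCard 2 := by
    intro e
    simp only [edgeSet, mem_inter, mem_powersetCard, subset_inter_iff]
    tauto
  have hchoose : 2 ≤ (#(S₁ ∩ S₂ ∩ S₃ ∩ S₄)).choose 2 := by
    rw [← card_powersetCard]
    exact h.trans (card_le_card hsub)
  by_contra! hlt
  exact absurd (hchoose.trans (Nat.choose_le_choose 2 (Nat.le_of_lt_succ hlt))) (by decide)

lemma IsCluster.exists_agreeingOn {F : Finset (Finset (Fin k × Fin s))} (hF : IsCluster F) :
    ∃ C : Finset (Fin k), #C = 3 ∧ ∃ f₁, ∃ f₂ ∈ agreeingOn C f₁, ∃ f₃ ∈ agreeingOn C f₁,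
      ∃ f₄ ∈ agreeingOn C f₁,
        graphEdges f₁ ∪ graphEdges f₂ ∪ graphEdges f₃ ∪ graphEdges f₄ = F := by
  obtain ⟨S₁, S₂, S₃, S₄, h₁, h₂, h₃, h₄, -, -, -, -, -, -, hcommon, rfl⟩ := hF
  obtain ⟨f₁, rfl⟩ := h₁.exists_functionGraph_eq
  obtain ⟨f₂, rfl⟩ := h₂.exists_functionGraph_eq
  obtain ⟨f₃, rfl⟩ := h₃.exists_functionGraph_eq
  obtain ⟨f₄, rfl⟩ := h₄.exists_functionGraph_eq
  obtain ⟨T, hT, hcard⟩ :=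
    exists_subset_card_eq (three_le_card_inter_of_two_le_card_inter_edgeSet hcommon)
  simp only [subset_inter_iff] at hT
  obtain ⟨⟨⟨hT₁, hT₂⟩, hT₃⟩, hT₄⟩ := hT
  exact ⟨T.image Prod.fst, (card_image_fst_of_subset_functionGraph hT₁).trans hcard,
    f₁, f₂, mem_agreeingOn_image_fst hT₂ hT₁, f₃, mem_agreeingOn_image_fst hT₃ hT₁,
    f₄, mem_agreeingOn_image_fst hT₄ hT₁, rfl⟩

lemma finsum_isCluster_le_sum (w : Finset (Finset (Fin k × Fin s)) → ℝ) (hw : ∀ F, 0 ≤ w F) :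
    ∑ᶠ F ∈ {F | IsCluster F}, w F ≤
      ∑ C ∈ univ.powersetCard 3, ∑ f₁, ∑ f₂ ∈ agreeingOn C f₁, ∑ f₃ ∈ agreeingOn C f₁,
        ∑ f₄ ∈ agreeingOn C f₁,
          w (graphEdges f₁ ∪ graphEdges f₂ ∪ graphEdges f₃ ∪ graphEdges f₄) := by
  let Q := (univ.powersetCard 3).sigma fun C : Finset (Fin k) =>
    (univ : Finset (Fin k → Fin s)).sigma fun f₁ => (agreeingOn C f₁).sigma fun _ =>
      (agreeingOn C f₁).sigma fun _ => agreeingOn C f₁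
  let cluster (q : Σ _ : Finset (Fin k), Σ _ _ _ : Fin k → Fin s, Fin k → Fin s) :=
    graphEdges q.2.1 ∪ graphEdges q.2.2.1 ∪ graphEdges q.2.2.2.1 ∪ graphEdges q.2.2.2.2
  have hsub : (Set.toFinite {F | IsCluster F}).toFinset ⊆ Q.image cluster := by
    intro F hF
    have hF : IsCluster F := by simpa only [Set.Finite.mem_toFinset, Set.mem_ofPred_eq] using hF
    obtain ⟨C, hC, f₁, f₂, h₂, f₃, h₃, f₄, h₄, rfl⟩ := hF.exists_agreeingOn
    refine mem_image.2 ⟨⟨C, f₁, f₂, f₃, f₄⟩, ?_, rfl⟩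
    simp [Q, hC, h₂, h₃, h₄]
  calc ∑ᶠ F ∈ {F | IsCluster F}, w F = ∑ F ∈ (Set.toFinite {F | IsCluster F}).toFinset, w F :=
        finsum_mem_eq_finite_toFinset_sum _ _
    _ ≤ ∑ F ∈ Q.image cluster, w F :=
        sum_le_sum_of_subset_of_nonneg hsub fun F _ _ => hw F
    _ ≤ ∑ q ∈ Q, w (cluster q) := sum_image_le_of_nonneg fun F _ => hw F
    _ = _ := by simp only [Q, cluster, sum_sigma]

lemma finsum_edgeWeight_isCluster_le (hk : 648 * k ^ 4 ≤ 2 ^ k) (hs : 2 ^ (k + 9) ≤ s ^ 2) :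
    ∑ᶠ F ∈ {F : Finset (Finset (Fin k × Fin s)) | IsCluster F}, edgeWeight F ≤
      k ^ 3 * (s ^ k / 2 ^ k.choose 2 * extensionFactor (Fin k) (Fin s) ^ 3) := by
  set ρ := extensionFactor (Fin k) (Fin s)
  have hρ : 0 ≤ ρ := extensionFactor_nonneg _ _
  calc _ ≤ _ := finsum_isCluster_le_sum edgeWeight edgeWeight_nonneg
    _ ≤ ∑ C ∈ (univ : Finset (Fin k)).powersetCard 3, ∑ f₁ : Fin k → Fin s,
          edgeWeight (graphEdges f₁) * ρ ^ 3 :=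
        sum_le_sum fun C hC => sum_le_sum fun f₁ _ =>
          sum_edgeWeight_union_four_le (by simpa using hk) (by simpa using hs)
            (mem_powersetCard.1 hC).2 f₁
    _ = k.choose 3 * (s ^ k / 2 ^ k.choose 2 * ρ ^ 3) := by
        simp [edgeWeight_eq_inv, card_graphEdges, div_eq_mul_inv, mul_assoc]
    _ ≤ k ^ 3 * (s ^ k / 2 ^ k.choose 2 * ρ ^ 3) := by
        gcongr
        exact_mod_cast Nat.choose_le_pow k 3

lemma finsum_edgeWeight_isCluster_rpow_le (hk₃ : 3 ≤ k) (hk : 648 * k ^ 4 ≤ 2 ^ k)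
    (hs : 2 ^ (k + 9) ≤ s ^ 2) (hks : 2 ^ 25 * k ^ 14 ≤ s) :
    (∑ᶠ F ∈ {F : Finset (Finset (Fin k × Fin s)) | IsCluster F}, edgeWeight F) ^ ((1 : ℝ) / 4) ≤
      s ^ (k - 2) / (16 * k ^ 2 * 2 ^ k.choose 2) := by
  have hks' : (2 : ℝ) ^ 25 * k ^ 14 ≤ s := by exact_mod_cast hks
  have hnonneg : 0 ≤ ∑ᶠ F ∈ {F : Finset (Finset (Fin k × Fin s)) | IsCluster F}, edgeWeight F :=
    finsum_nonneg fun F => finsum_nonneg fun _ => edgeWeight_nonneg F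
  rw [one_div, Real.rpow_inv_le_iff_of_pos hnonneg (by positivity) (by positivity),
    Real.rpow_ofNat]
  refine (finsum_edgeWeight_isCluster_le hk hs).trans ?_
  obtain ⟨m, rfl⟩ := Nat.exists_eq_add_of_le' hk₃
  simp only [extensionFactor, Fintype.card_fin, Nat.add_sub_cancel, Nat.reduceSubDiff]
  set n := m + 3
  set W : ℝ := 2 ^ n.choose 2
  -- `2 ^ 25 = 8 ^ 3 * 16 ^ 4`, and `n ^ 14` collects `n ^ 3`, the `n ^ 3` of the three extension
  -- factors, and the fourth power of `n ^ 2`.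
  calc (n : ℝ) ^ 3 * (s ^ n / W * (8 * n * s ^ m / W) ^ 3)
      = s ^ n * (s ^ m) ^ 3 * (2 ^ 25 * n ^ 14) / (16 * n ^ 2 * W) ^ 4 := by
        field_simp
        ring
    _ ≤ s ^ n * (s ^ m) ^ 3 * s / (16 * n ^ 2 * W) ^ 4 := by gcongr
    _ = (s ^ (m + 1) / (16 * n ^ 2 * W)) ^ 4 := by
        rw [div_pow]
        congr 1
        ring

lemma sixteen_mul_card_board_mul_lt (hk₃ : 3 ≤ k) (hk : 16 * k ^ 4 ≤ 2 ^ k)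
    (hs : 2 ^ (k + 9) ≤ s ^ 2) :
    16 * (#(board k s) : ℝ) * (s ^ (k - 2) / (16 * k ^ 2 * 2 ^ k.choose 2) + 1 / 4) <
      s ^ k / 2 ^ k.choose 2 := by
  have hboard : 2 * (#(board k s) : ℝ) ≤ k ^ 2 * s ^ 2 := by
    exact_mod_cast two_mul_card_board_le k s
  have hlarge : 4 * (k : ℝ) ^ 2 * 2 ^ k.choose 2 < s ^ (k - 2) := by
    exact_mod_cast four_mul_sq_mul_two_pow_choose_lt hk₃ hk hs
  have hk₀ : 0 < k := by lia
  have hs₀ : 0 < s := Nat.pos_of_ne_zero <| by rintro rfl; simp at hs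
  calc _ ≤ 8 * ((k : ℝ) ^ 2 * s ^ 2) * (s ^ (k - 2) / (16 * k ^ 2 * 2 ^ k.choose 2) + 1 / 4) := by
        gcongr ?_ * _
        linarith
    _ = s ^ 2 * (s ^ (k - 2) + 4 * k ^ 2 * 2 ^ k.choose 2) / (2 * 2 ^ k.choose 2) := by
        field_simp
        ring
    _ < s ^ 2 * (s ^ (k - 2) + s ^ (k - 2)) / (2 * 2 ^ k.choose 2) := by gcongr
    _ = s ^ k / 2 ^ k.choose 2 := by
        rw [← two_mul, mul_left_comm, pow_mul_pow_sub _ (by lia), mul_div_mul_left _ _ two_ne_zero]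

end Clusters

end

/-- For all large enough `k` and all `s` with `s ≥ 2^{(k+9)/2}`, with `ℱ` the
family of edge sets of transversals and `ℱ₂⁴` the family of clusters:
`T(ℱ) > 16·|X|·(T(ℱ₂⁴)^{1/4} + 1/4)`. -/
theorem advanced_weak_win_condition :
    ∃ K : ℕ, ∀ k : ℕ, K ≤ k → ∀ s : ℕ, (s : ℝ) ≥ (2 : ℝ) ^ (((k : ℝ) + 9) / 2) →
      ∑ᶠ F ∈ {F : Finset (Finset (Fin k × Fin s)) |
          ∃ S : Finset (Fin k × Fin s), IsTransversal S ∧ F = edgeSet S},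
          (2 : ℝ) ^ (-(F.card : ℝ))
        > 16 * ((board k s).card : ℝ) *
            ((∑ᶠ F ∈ {F : Finset (Finset (Fin k × Fin s)) | IsCluster F},
                (2 : ℝ) ^ (-(F.card : ℝ))) ^ ((1 : ℝ) / 4) + 1 / 4) := by
  obtain ⟨K, hK⟩ := Filter.eventually_atTop.1 <|
    (eventually_const_mul_pow_le_pow (2 ^ 41) 28 one_lt_two).and <|
      (eventually_const_mul_pow_le_pow 648 4 one_lt_two).and (Filter.eventually_ge_atTop 3)
  refine ⟨K, fun k hk s hs => ?_⟩
  obtain ⟨hk₂₈, hk₄, hk₃⟩ := hK k hk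
  have hs₂ : 2 ^ (k + 9) ≤ s ^ 2 := two_pow_le_sq_of_rpow_half_le hs
  have hks : 2 ^ 25 * k ^ 14 ≤ s := two_pow_mul_pow_le_of_two_pow_le_sq hk₂₈ hs₂
  calc _ ≤ 16 * ((board k s).card : ℝ) *
          (s ^ (k - 2) / (16 * k ^ 2 * 2 ^ k.choose 2) + 1 / 4) := by
        gcongr
        exact finsum_edgeWeight_isCluster_rpow_le hk₃ hk₄ hs₂ hks
    _ < s ^ k / 2 ^ k.choose 2 := sixteen_mul_card_board_mul_lt hk₃ (by lia) hs₂
    _ = _ := (finsum_edgeWeight_transversals (by lia)).symm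
end

section
/- For all integers n ≥ 2 and all positive integers k satisfying (n : ℝ) ≥ k · 2^{(k+9)/2} and (n : ℝ) < (k+1) · 2^{(k+10)/2}, one has (k : ℝ) ≥ 2·log₂ n − 2·log₂(log₂ n) − 12. (In particular, if k is the largest integer with n ≥ k·2^{(k+9)/2}, then k ≥ 2 log₂ n − 2 log₂ log₂ n − 12.) -/
/-!
Put `L = log₂ x` and take logarithms in `x < (y + 1) · 2 ^ ((y + c) / 2)` to get
`2 L - 2 log₂ (y + 1) - c < y`. If `y + 1 ≤ 2 L`, replacing `y + 1` by `2 L` gives the bound, the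
extra `2` coming from `2 log₂ 2`. Otherwise `2 L - 1 < y` already, which suffices for `c ≥ -1`
because `x ≥ 2` makes `log₂ L ≥ 0`.
-/

theorem logb_lt_logb_add_of_lt_mul_rpow {b x a t : ℝ} (hb : 1 < b) (hx : 0 < x)
    (h : x < a * b ^ t) : Real.logb b x < Real.logb b a + t := by
  have hb₀ : 0 < b := zero_lt_one.trans hb
  have hbt : 0 < b ^ t := Real.rpow_pos_of_pos hb₀ t
  have ha : 0 < a := pos_of_mul_pos_left (hx.trans h) hbt.le
  calc Real.logb b x < Real.logb b (a * b ^ t) := Real.logb_lt_logb hb hx h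
    _ = Real.logb b a + t := by
      rw [Real.logb_mul ha.ne' hbt.ne', Real.logb_rpow hb₀ hb.ne']

theorem two_mul_sub_two_mul_logb_lt {L y c : ℝ} (hL : 1 ≤ L) (hy : -1 < y) (hc : -1 ≤ c)
    (h : L < Real.logb 2 (y + 1) + (y + c) / 2) :
    2 * L - 2 * Real.logb 2 L - (c + 2) < y := by
  rcases le_or_gt (y + 1) (2 * L) with hyL | hLy
  · have hlog : Real.logb 2 (y + 1) ≤ 1 + Real.logb 2 L :=
      calc Real.logb 2 (y + 1) ≤ Real.logb 2 (2 * L) :=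
            Real.logb_le_logb_of_le one_lt_two (by linarith) hyL
        _ = 1 + Real.logb 2 L := by
            rw [Real.logb_mul two_ne_zero (by positivity), Real.logb_self_eq_one one_lt_two]
    linarith
  · have hlog : 0 ≤ Real.logb 2 L := Real.logb_nonneg one_lt_two hL
    linarith

theorem k_ge_two_log_sub_general {x y c : ℝ} (hx : 2 ≤ x) (hc : -1 ≤ c)
    (h : x < (y + 1) * (2 : ℝ) ^ ((y + c) / 2)) :
    2 * Real.logb 2 x - 2 * Real.logb 2 (Real.logb 2 x) - (c + 2) < y := by
  have hx₀ : 0 < x := two_pos.trans_le hx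
  have hL : 1 ≤ Real.logb 2 x := by
    rwa [Real.le_logb_iff_rpow_le one_lt_two hx₀, Real.rpow_one]
  have hy : 0 < y + 1 := pos_of_mul_pos_left (hx₀.trans h) (by positivity)
  exact two_mul_sub_two_mul_logb_lt hL (by linarith) hc
    (logb_lt_logb_add_of_lt_mul_rpow one_lt_two hx₀ h)

/-- If `n ≥ 2`, `k ≥ 1`, `n ≥ k·2^{(k+9)/2}` and `n < (k+1)·2^{(k+10)/2}`,
then `k ≥ 2 log₂ n - 2 log₂ log₂ n - 12`. -/
theorem k_ge_two_log_sub (n k : ℕ) (hn : 2 ≤ n) (hk : 1 ≤ k)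
    (h1 : (n : ℝ) ≥ (k : ℝ) * (2 : ℝ) ^ (((k : ℝ) + 9) / 2))
    (h2 : (n : ℝ) < ((k : ℝ) + 1) * (2 : ℝ) ^ (((k : ℝ) + 10) / 2)) :
    (k : ℝ) ≥ 2 * Real.logb 2 n - 2 * Real.logb 2 (Real.logb 2 n) - 12 := by
  have := k_ge_two_log_sub_general (by exact_mod_cast hn) (by norm_num) h2
  linarith
end
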